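/- arXiv:1808.00587 — 2 statements merged into one kernel-verified Lean document; each statement's English description precedes it below -/
import Mathlib

section
/- Suppose I_reg ⊆ int(E) is an open interval of maximal length such that for every ε ∈ I_reg there is a maximally complementary solution (X*(ε), y*(ε), S*(ε)) at which the Jacobian J(X*(ε), y*(ε), S*(ε)) is nonsingular, and let ε̄ ∈ int(E) be a boundary point of I_reg. If no strictly complementary optimal solution of (P_{ε̄}) and (D_{ε̄}) exists, then ε̄ is a transition point of the optimal partition. In particular, if both P*(ε̄) and D*(ε̄) are singletons, then ε̄ is a transition point. -/
open Matrix Set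

noncomputable section

variable {n m : ℕ}

/-- Feasibility for the primal SDO problem `(P_ε)` (the feasible set does not depend on `ε`). -/
def PrimalFeasible (A : Fin m → Matrix (Fin n) (Fin n) ℝ) (b : Fin m → ℝ)
    (X : Matrix (Fin n) (Fin n) ℝ) : Prop :=
  X.IsSymm ∧ (∀ i, ((A i) * X).trace = b i) ∧ X.PosSemidef

/-- Feasibility for the dual SDO problem `(D_ε)`. -/
def DualFeasible (C Cbar : Matrix (Fin n) (Fin n) ℝ)
    (A : Fin m → Matrix (Fin n) (Fin n) ℝ) (ε : ℝ)
    (y : Fin m → ℝ) (S : Matrix (Fin n) (Fin n) ℝ) : Prop :=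
  S.IsSymm ∧ (∑ i, y i • A i) + S = C + ε • Cbar ∧ S.PosSemidef

/-- The optimal value function `v(ε)` of `(P_ε)`, with values in `EReal`. -/
def vfun (C Cbar : Matrix (Fin n) (Fin n) ℝ) (A : Fin m → Matrix (Fin n) (Fin n) ℝ)
    (b : Fin m → ℝ) (ε : ℝ) : EReal :=
  sInf ((fun X => (((C + ε • Cbar) * X).trace : EReal)) '' {X | PrimalFeasible A b X})

/-- `E = {ε : v(ε) > -∞}`. -/
def Eset (C Cbar : Matrix (Fin n) (Fin n) ℝ) (A : Fin m → Matrix (Fin n) (Fin n) ℝ)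
    (b : Fin m → ℝ) : Set ℝ :=
  {ε | ⊥ < vfun C Cbar A b ε}

/-- The primal optimal set `P*(ε)`. -/
def PrimalOpt (C Cbar : Matrix (Fin n) (Fin n) ℝ) (A : Fin m → Matrix (Fin n) (Fin n) ℝ)
    (b : Fin m → ℝ) (ε : ℝ) : Set (Matrix (Fin n) (Fin n) ℝ) :=
  {X | PrimalFeasible A b X ∧ ∀ X', PrimalFeasible A b X' →
    ((C + ε • Cbar) * X).trace ≤ ((C + ε • Cbar) * X').trace}

/-- The dual optimal set `D*(ε)`. -/
def DualOpt (C Cbar : Matrix (Fin n) (Fin n) ℝ) (A : Fin m → Matrix (Fin n) (Fin n) ℝ)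
    (b : Fin m → ℝ) (ε : ℝ) : Set ((Fin m → ℝ) × Matrix (Fin n) (Fin n) ℝ) :=
  {p | DualFeasible C Cbar A ε p.1 p.2 ∧ ∀ y' S', DualFeasible C Cbar A ε y' S' →
    ∑ i, b i * y' i ≤ ∑ i, b i * p.1 i}

/-- A maximally complementary optimal solution: `X` lies in the relative interior of `P*(ε)`
and `(y, S)` in the relative interior of `D*(ε)`. -/
def MaxComp (C Cbar : Matrix (Fin n) (Fin n) ℝ) (A : Fin m → Matrix (Fin n) (Fin n) ℝ)
    (b : Fin m → ℝ) (ε : ℝ) (X : Matrix (Fin n) (Fin n) ℝ) (y : Fin m → ℝ)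
    (S : Matrix (Fin n) (Fin n) ℝ) : Prop :=
  X ∈ intrinsicInterior ℝ (PrimalOpt C Cbar A b ε) ∧
    (y, S) ∈ intrinsicInterior ℝ (DualOpt C Cbar A b ε)

/-- `π(ε) = π(ε')`: the optimal partitions at `ε` and `ε'` coincide, expressed through
maximally complementary solutions (`B = range X*`, `N = range S*`, `T` being determined
by `B` and `N`). -/
def SamePartition (C Cbar : Matrix (Fin n) (Fin n) ℝ) (A : Fin m → Matrix (Fin n) (Fin n) ℝ)
    (b : Fin m → ℝ) (ε ε' : ℝ) : Prop :=
  ∃ X y S X' y' S', MaxComp C Cbar A b ε X y S ∧ MaxComp C Cbar A b ε' X' y' S' ∧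
    LinearMap.range X.mulVecLin = LinearMap.range X'.mulVecLin ∧
    LinearMap.range S.mulVecLin = LinearMap.range S'.mulVecLin

/-- The standing assumptions: symmetric data, linearly independent constraint matrices and
the interior point condition at `ε = 0`. -/
def StandingAssumptions (C Cbar : Matrix (Fin n) (Fin n) ℝ)
    (A : Fin m → Matrix (Fin n) (Fin n) ℝ) (b : Fin m → ℝ) : Prop :=
  C.IsSymm ∧ Cbar.IsSymm ∧ (∀ i, (A i).IsSymm) ∧ LinearIndependent ℝ A ∧
    ∃ X y S, PrimalFeasible A b X ∧ X.PosDef ∧ DualFeasible C Cbar A 0 y S ∧ S.PosDef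

/-- The invariancy set of `ε̄`. -/
def InvSet (C Cbar : Matrix (Fin n) (Fin n) ℝ) (A : Fin m → Matrix (Fin n) (Fin n) ℝ)
    (b : Fin m → ℝ) (εbar : ℝ) : Set ℝ :=
  {ε | ε ∈ interior (Eset C Cbar A b) ∧ SamePartition C Cbar A b ε εbar}

/-- `dim B(ε) = dim B(ε')` and `dim N(ε) = dim N(ε')`, expressed through maximally
complementary solutions. -/
def DimsMatch (C Cbar : Matrix (Fin n) (Fin n) ℝ) (A : Fin m → Matrix (Fin n) (Fin n) ℝ)
    (b : Fin m → ℝ) (ε ε' : ℝ) : Prop :=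
  ∀ X y S X' y' S', MaxComp C Cbar A b ε X y S → MaxComp C Cbar A b ε' X' y' S' →
    Module.finrank ℝ (LinearMap.range X.mulVecLin) =
        Module.finrank ℝ (LinearMap.range X'.mulVecLin) ∧
      Module.finrank ℝ (LinearMap.range S.mulVecLin) =
        Module.finrank ℝ (LinearMap.range S'.mulVecLin)

/-- A transition point: a singleton invariancy set such that every neighborhood contains a
parameter at which `dim B` or `dim N` differs. -/
def IsTransitionPoint (C Cbar : Matrix (Fin n) (Fin n) ℝ) (A : Fin m → Matrix (Fin n) (Fin n) ℝ)
    (b : Fin m → ℝ) (εbar : ℝ) : Prop :=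
  εbar ∈ interior (Eset C Cbar A b) ∧
    (∀ ε ∈ interior (Eset C Cbar A b), ε ≠ εbar → ¬ SamePartition C Cbar A b ε εbar) ∧
    ∀ ξ : ℝ, 0 < ξ → ∃ ε ∈ Set.Ioo (εbar - ξ) (εbar + ξ) ∩ interior (Eset C Cbar A b),
      ¬ DimsMatch C Cbar A b ε εbar

/-- Existence of a strictly complementary optimal solution at `ε`. -/
def HasStrictComp (C Cbar : Matrix (Fin n) (Fin n) ℝ) (A : Fin m → Matrix (Fin n) (Fin n) ℝ)
    (b : Fin m → ℝ) (ε : ℝ) : Prop :=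
  ∃ X y S, X ∈ PrimalOpt C Cbar A b ε ∧ (y, S) ∈ DualOpt C Cbar A b ε ∧ (X + S).PosDef

/-- Nonsingularity of the Jacobian `J(X, y, S)` of the optimality system, as a linear map on
`S^n × ℝ^m × S^n`: only the trivial symmetric triple is mapped to zero. -/
def JNonsingular (A : Fin m → Matrix (Fin n) (Fin n) ℝ)
    (X S : Matrix (Fin n) (Fin n) ℝ) : Prop :=
  ∀ (DX DS : Matrix (Fin n) (Fin n) ℝ) (Dy : Fin m → ℝ), DX.IsSymm → DS.IsSymm →
    (∀ i, ((A i) * DX).trace = 0) → ((∑ i, Dy i • A i) + DS = 0) →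
    (DX * S + S * DX + X * DS + DS * X = 0) → DX = 0 ∧ Dy = 0 ∧ DS = 0

/-- Primal nondegeneracy of a primal feasible `X`. -/
def PrimalNondeg (A : Fin m → Matrix (Fin n) (Fin n) ℝ)
    (X : Matrix (Fin n) (Fin n) ℝ) : Prop :=
  ∃ (r : ℕ) (M₁ : Matrix (Fin n) (Fin r) ℝ) (M₂ : Matrix (Fin n) (Fin (n - r)) ℝ),
    M₁ᵀ * M₁ = 1 ∧ M₂ᵀ * M₂ = 1 ∧ M₁ᵀ * M₂ = 0 ∧
    LinearMap.range M₁.mulVecLin = LinearMap.range X.mulVecLin ∧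
    LinearIndependent ℝ (fun i =>
      Matrix.fromBlocks (M₁ᵀ * (A i) * M₁) (M₁ᵀ * (A i) * M₂) (M₂ᵀ * (A i) * M₁) 0)

/-- Dual nondegeneracy of a dual feasible `(y, S)` (the condition involves only `S`). -/
def DualNondeg (A : Fin m → Matrix (Fin n) (Fin n) ℝ)
    (S : Matrix (Fin n) (Fin n) ℝ) : Prop :=
  ∃ (k : ℕ) (N₁ : Matrix (Fin n) (Fin k) ℝ),
    N₁ᵀ * N₁ = 1 ∧ LinearMap.range N₁.mulVecLin = LinearMap.ker S.mulVecLin ∧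
    ∀ W : Matrix (Fin k) (Fin k) ℝ, W.IsSymm →
      W ∈ Submodule.span ℝ (Set.range fun i => N₁ᵀ * (A i) * N₁)

/-- A central solution with parameter `μ` for the problems `(P_ε)` and `(D_ε)`. -/
def CentralSol (C Cbar : Matrix (Fin n) (Fin n) ℝ) (A : Fin m → Matrix (Fin n) (Fin n) ℝ)
    (b : Fin m → ℝ) (ε μ : ℝ) (X : Matrix (Fin n) (Fin n) ℝ) (y : Fin m → ℝ)
    (S : Matrix (Fin n) (Fin n) ℝ) : Prop :=
  PrimalFeasible A b X ∧ DualFeasible C Cbar A ε y S ∧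
    X * S = μ • (1 : Matrix (Fin n) (Fin n) ℝ)

/-- The Frobenius norm of a matrix. -/
def frobNorm {α β : Type*} [Fintype α] [Fintype β] (M : Matrix α β ℝ) : ℝ :=
  Real.sqrt (∑ i, ∑ j, (M i j) ^ 2)

/-- The spectral norm (induced 2-norm) of a square matrix. -/
def specNorm {N : ℕ} (M : Matrix (Fin N) (Fin N) ℝ) : ℝ :=
  ‖LinearMap.toContinuousLinearMap (Matrix.toEuclideanLin M)‖

/-- The smallest eigenvalue of a symmetric matrix, via the Rayleigh quotient. -/
def lamMin {k : ℕ} (M : Matrix (Fin k) (Fin k) ℝ) : ℝ :=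
  sInf {r : ℝ | ∃ x : Fin k → ℝ, (∑ i, (x i) ^ 2) = 1 ∧ r = x ⬝ᵥ M.mulVec x}

/-- `θ^μ`: the operator norm of the inverse of the Jacobian `J(X, y, S)` on
`S^n × ℝ^m × S^n`, characterized as the least constant `t ≥ 0` with
`‖(ΔX, Δy, ΔS)‖ ≤ t * ‖J(X,y,S)(ΔX, Δy, ΔS)‖` for all symmetric `ΔX`, `ΔS`. -/
def thetaMu (A : Fin m → Matrix (Fin n) (Fin n) ℝ)
    (X S : Matrix (Fin n) (Fin n) ℝ) : ℝ :=
  sInf {t : ℝ | 0 ≤ t ∧ ∀ (DX DS : Matrix (Fin n) (Fin n) ℝ) (Dy : Fin m → ℝ),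
    DX.IsSymm → DS.IsSymm →
    Real.sqrt (frobNorm DX ^ 2 + (∑ i, (Dy i) ^ 2) + frobNorm DS ^ 2) ≤
      t * Real.sqrt ((∑ i, (((A i) * DX).trace) ^ 2) +
        frobNorm ((∑ i, Dy i • A i) + DS) ^ 2 +
        frobNorm ((1 / 2 : ℝ) • (DX * S + S * DX + X * DS + DS * X)) ^ 2)}

/-- A nonlinearity interval: a non-singleton open subinterval of `int(E)`, of maximal length,
on which `dim B(·)` and `dim N(·)` are constant while the optimal partition `π(·)` varies. -/
def IsNonlinearityInterval (C Cbar : Matrix (Fin n) (Fin n) ℝ)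
    (A : Fin m → Matrix (Fin n) (Fin n) ℝ) (b : Fin m → ℝ) (I : Set ℝ) : Prop :=
  I ⊆ interior (Eset C Cbar A b) ∧ IsOpen I ∧ I.OrdConnected ∧
    (∃ a ∈ I, ∃ c ∈ I, a ≠ c) ∧
    (∀ ε ∈ I, ∀ ε' ∈ I, DimsMatch C Cbar A b ε ε') ∧
    ¬ (∀ ε ∈ I, ∀ ε' ∈ I, SamePartition C Cbar A b ε ε') ∧
    ∀ I' : Set ℝ, I ⊆ I' → I' ⊆ interior (Eset C Cbar A b) → IsOpen I' → I'.OrdConnected →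
      (∀ ε ∈ I', ∀ ε' ∈ I', DimsMatch C Cbar A b ε ε') → I' = I

end


section Basics

lemma psd_factor {n : ℕ} {X : Matrix (Fin n) (Fin n) ℝ} (h : X.PosSemidef) :
    ∃ R : Matrix (Fin n) (Fin n) ℝ, X = Rᵀ * R := by
  open scoped MatrixOrder Matrix.Norms.L2Operator in
  obtain ⟨R, hR⟩ := (CStarAlgebra.nonneg_iff_eq_star_mul_self (a := X)).1 h.nonneg
  exact ⟨R, by rw [hR, star_eq_conjTranspose, conjTranspose_eq_transpose_of_trivial]⟩

lemma psd_of_tr {n : ℕ} (R : Matrix (Fin n) (Fin n) ℝ) : (Rᵀ * R).PosSemidef := by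
  have := posSemidef_conjTranspose_mul_self R
  rwa [conjTranspose_eq_transpose_of_trivial] at this

lemma psd_conj {n : ℕ} {X : Matrix (Fin n) (Fin n) ℝ} (h : X.PosSemidef)
    (R : Matrix (Fin n) (Fin n) ℝ) : (R * X * Rᵀ).PosSemidef := by
  have := h.mul_mul_conjTranspose_same R
  rwa [conjTranspose_eq_transpose_of_trivial] at this

lemma psd_symm {n : ℕ} {X : Matrix (Fin n) (Fin n) ℝ} (h : X.PosSemidef) : X.IsSymm := by
  have := h.isHermitian
  unfold Matrix.IsHermitian at this
  rwa [conjTranspose_eq_transpose_of_trivial] at this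

lemma herm_of_symm {n : ℕ} {X : Matrix (Fin n) (Fin n) ℝ} (h : X.IsSymm) : X.IsHermitian := by
  unfold Matrix.IsHermitian
  rwa [conjTranspose_eq_transpose_of_trivial]

lemma tr_nonneg {n : ℕ} {X S : Matrix (Fin n) (Fin n) ℝ} (hX : X.PosSemidef)
    (hS : S.PosSemidef) : 0 ≤ (X * S).trace := by
  obtain ⟨R, rfl⟩ := psd_factor hS
  have h := (psd_conj hX R).trace_nonneg
  rw [Matrix.trace_mul_comm, ← Matrix.mul_assoc, Matrix.trace_mul_comm] at h
  exact h

lemma eq_zero_of_tr_mul_transpose {n : ℕ} {M : Matrix (Fin n) (Fin n) ℝ}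
    (h : (M * Mᵀ).trace = 0) : M = 0 := by
  have := (trace_mul_conjTranspose_self_eq_zero_iff (A := M)).1
  rw [conjTranspose_eq_transpose_of_trivial] at this
  exact this h

lemma eq_zero_of_transpose_mul {n : ℕ} {M : Matrix (Fin n) (Fin n) ℝ}
    (h : Mᵀ * M = 0) : M = 0 := by
  apply eq_zero_of_tr_mul_transpose
  rw [Matrix.trace_mul_comm, h, Matrix.trace_zero]

lemma mul_eq_zero_of_tr {n : ℕ} {X S : Matrix (Fin n) (Fin n) ℝ} (hX : X.PosSemidef)
    (hS : S.PosSemidef) (h : (X * S).trace = 0) : X * S = 0 := by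
  obtain ⟨R, rfl⟩ := psd_factor hS
  obtain ⟨Q, rfl⟩ := psd_factor hX
  have : Q * Rᵀ = 0 := by
    apply eq_zero_of_tr_mul_transpose
    rw [← h, transpose_mul, transpose_transpose, Matrix.trace_mul_comm]
    rw [show R * Qᵀ * (Q * Rᵀ) = R * (Qᵀ * Q * Rᵀ) by simp only [Matrix.mul_assoc],
      Matrix.trace_mul_comm]
    simp only [Matrix.mul_assoc]
  rw [show Qᵀ * Q * (Rᵀ * R) = Qᵀ * (Q * Rᵀ) * R by simp only [Matrix.mul_assoc], this]
  simp

lemma mul_comm_zero {n : ℕ} {X S : Matrix (Fin n) (Fin n) ℝ} (hX : X.IsSymm)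
    (hS : S.IsSymm) (h : X * S = 0) : S * X = 0 := by
  have := congrArg transpose h
  rwa [transpose_mul, hX.eq, hS.eq, transpose_zero] at this

/-- the entrywise l1 size of a matrix -/
def l1 {n : ℕ} (M : Matrix (Fin n) (Fin n) ℝ) : ℝ := ∑ i, ∑ j, |M i j|

lemma l1_nonneg {n : ℕ} (M : Matrix (Fin n) (Fin n) ℝ) : 0 ≤ l1 M :=
  Finset.sum_nonneg fun _ _ => Finset.sum_nonneg fun _ _ => abs_nonneg _

lemma l1_cont {n : ℕ} : Continuous (l1 (n := n)) := by
  unfold l1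
  fun_prop

lemma entry_le {n : ℕ} {X : Matrix (Fin n) (Fin n) ℝ} (hX : X.PosSemidef) (i j : Fin n) :
    |X i j| ≤ X.trace := by
  obtain ⟨R, rfl⟩ := psd_factor hX
  have hd : ∀ k, (Rᵀ * R) k k = ∑ l, (R l k) ^ 2 := by
    intro k
    simp [Matrix.mul_apply, sq]
  have hle : ∀ k, (Rᵀ * R) k k ≤ (Rᵀ * R).trace := by
    intro k
    unfold Matrix.trace
    apply Finset.single_le_sum (f := fun k => (Rᵀ * R).diag k) _ (Finset.mem_univ k)
    intro k _
    simp only [Matrix.diag]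
    rw [hd]; positivity
  have h1 : |(Rᵀ * R) i j| ≤ ((Rᵀ * R) i i + (Rᵀ * R) j j) / 2 := by
    rw [hd, hd, Matrix.mul_apply, ← Finset.sum_add_distrib, Finset.sum_div]
    refine (Finset.abs_sum_le_sum_abs _ _).trans (Finset.sum_le_sum fun l _ => ?_)
    rw [transpose_apply, abs_le]
    constructor <;> nlinarith [sq_nonneg (R l i + R l j), sq_nonneg (R l i - R l j)]
  linarith [hle i, hle j]

lemma abs_tr_le {n : ℕ} (G : Matrix (Fin n) (Fin n) ℝ) {X : Matrix (Fin n) (Fin n) ℝ}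
    (hX : X.PosSemidef) : |(G * X).trace| ≤ l1 G * X.trace := by
  unfold l1
  rw [Matrix.trace, Finset.sum_mul]
  refine (Finset.abs_sum_le_sum_abs _ _).trans (Finset.sum_le_sum fun i _ => ?_)
  rw [Matrix.diag, Matrix.mul_apply, Finset.sum_mul]
  refine (Finset.abs_sum_le_sum_abs _ _).trans (Finset.sum_le_sum fun j _ => ?_)
  rw [abs_mul]
  exact mul_le_mul_of_nonneg_left (entry_le hX j i) (abs_nonneg _)

lemma pd_lower {n : ℕ} {S : Matrix (Fin n) (Fin n) ℝ} (hS : S.PosDef) :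
    ∃ l : ℝ, 0 < l ∧ ∀ X : Matrix (Fin n) (Fin n) ℝ, X.PosSemidef →
      l * X.trace ≤ (S * X).trace := by
  obtain ⟨R, hR⟩ := psd_factor hS.posSemidef
  have hu : IsUnit S.det := (Matrix.isUnit_iff_isUnit_det _).1 hS.isUnit
  have huR : IsUnit R.det := by
    rw [hR, det_mul] at hu
    exact isUnit_of_mul_isUnit_right hu
  set G := R⁻¹ᵀ * R⁻¹ with hG
  refine ⟨(l1 G + 1)⁻¹, by have := l1_nonneg G; positivity, fun X hX => ?_⟩
  have hY := psd_conj hX R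
  have h1 : (R * X * Rᵀ).trace = (S * X).trace := by
    rw [hR, Matrix.trace_mul_comm]
    simp only [Matrix.mul_assoc]
  have h2 : (G * (R * X * Rᵀ)).trace = X.trace := by
    rw [hG, show R⁻¹ᵀ * R⁻¹ * (R * X * Rᵀ) = R⁻¹ᵀ * ((R⁻¹ * R) * X * Rᵀ) by
      simp only [Matrix.mul_assoc], Matrix.nonsing_inv_mul _ huR, Matrix.trace_mul_comm,
      Matrix.one_mul, Matrix.mul_assoc, ← transpose_mul, Matrix.nonsing_inv_mul _ huR]
    simp
  have h3 := abs_tr_le G hY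
  rw [h1, h2] at h3
  have h4 : 0 ≤ (S * X).trace := tr_nonneg hS.posSemidef hX
  have h5 := le_of_abs_le h3
  have := l1_nonneg G
  rw [inv_mul_le_iff₀ (by positivity)]
  linarith

lemma quad_eq_tr {n : ℕ} (M : Matrix (Fin n) (Fin n) ℝ) (x : Fin n → ℝ) :
    x ⬝ᵥ (M *ᵥ x) = (M * vecMulVec x x).trace := by
  rw [Matrix.mul_vecMulVec, Matrix.trace_vecMulVec, dotProduct_comm]

lemma vv_psd {n : ℕ} (x : Fin n → ℝ) : (vecMulVec x x).PosSemidef := by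
  simpa using posSemidef_vecMulVec_self_star x

lemma psd_iff {n : ℕ} {M : Matrix (Fin n) (Fin n) ℝ} (hs : M.IsSymm) :
    M.PosSemidef ↔ ∀ x : Fin n → ℝ, 0 ≤ x ⬝ᵥ (M *ᵥ x) := by
  rw [posSemidef_iff_dotProduct_mulVec]
  exact ⟨fun h x => by simpa using h.2 x, fun h => ⟨herm_of_symm hs, fun x => by simpa using h x⟩⟩

lemma pd_iff {n : ℕ} {M : Matrix (Fin n) (Fin n) ℝ} (hs : M.IsSymm) :
    M.PosDef ↔ ∀ x : Fin n → ℝ, x ≠ 0 → 0 < x ⬝ᵥ (M *ᵥ x) := by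
  rw [posDef_iff_dotProduct_mulVec]
  exact ⟨fun h x hx => by simpa using h.2 hx,
    fun h => ⟨herm_of_symm hs, fun x hx => by simpa using h x hx⟩⟩

lemma pd_perturb {n : ℕ} {S : Matrix (Fin n) (Fin n) ℝ} (hS : S.PosDef) :
    ∃ l : ℝ, 0 < l ∧ ∀ T : Matrix (Fin n) (Fin n) ℝ, T.IsSymm → l1 (T - S) < l → T.PosDef := by
  obtain ⟨l, hl, h⟩ := pd_lower hS
  refine ⟨l, hl, fun T hT hd => (pd_iff hT).2 fun x hx => ?_⟩
  have h1 := h _ (vv_psd x)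
  have h2 := abs_tr_le (T - S) (vv_psd x)
  have h3 : 0 < (vecMulVec x x).trace := by
    rw [Matrix.trace_vecMulVec]
    have := Matrix.dotProduct_star_self_pos_iff (v := x)
    simpa using this.2 hx
  rw [quad_eq_tr]
  rw [Matrix.sub_mul, Matrix.trace_sub] at h2
  have := (abs_le.1 h2).1
  nlinarith

lemma psd_isClosed {n : ℕ} : IsClosed {X : Matrix (Fin n) (Fin n) ℝ | X.PosSemidef} := by
  have : {X : Matrix (Fin n) (Fin n) ℝ | X.PosSemidef} =
      {X | Xᵀ = X} ∩ ⋂ x : Fin n → ℝ, {X | 0 ≤ x ⬝ᵥ (X *ᵥ x)} := by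
    ext X
    simp only [Set.mem_ofPred_eq, mem_inter_iff, mem_iInter]
    constructor
    · intro h
      exact ⟨psd_symm h, (psd_iff (psd_symm h)).1 h⟩
    · rintro ⟨h1, h2⟩
      exact (psd_iff h1).2 h2
  rw [this]
  refine IsClosed.inter (isClosed_eq (by fun_prop) continuous_id) (isClosed_iInter fun x => ?_)
  exact isClosed_le continuous_const (by fun_prop)

lemma ker_of_quad {n : ℕ} {X : Matrix (Fin n) (Fin n) ℝ} (hX : X.PosSemidef) {x : Fin n → ℝ}
    (h : x ⬝ᵥ (X *ᵥ x) = 0) : X *ᵥ x = 0 := by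
  have := (hX.dotProduct_mulVec_zero_iff x).1
  simpa [h] using this

/-- `X + S` is positive definite iff the kernels intersect trivially. -/
lemma add_pd_iff {n : ℕ} {X S : Matrix (Fin n) (Fin n) ℝ} (hX : X.PosSemidef)
    (hS : S.PosSemidef) :
    (X + S).PosDef ↔ ∀ x, X *ᵥ x = 0 → S *ᵥ x = 0 → x = 0 := by
  rw [pd_iff ((psd_symm hX).add (psd_symm hS))]
  constructor
  · intro h x h1 h2
    by_contra hx
    have := h x hx
    rw [Matrix.add_mulVec, h1, h2] at this
    simp at this
  · intro h x hx
    have h1 := (psd_iff (psd_symm hX)).1 hX x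
    have h2 := (psd_iff (psd_symm hS)).1 hS x
    rw [Matrix.add_mulVec, dotProduct_add]
    by_contra hc
    exact hx (h x (ker_of_quad hX (by linarith)) (ker_of_quad hS (by linarith)))

end Basics

section Duality

/-- the linear functional of constraints -/
def PhiA {n m : ℕ} (A : Fin m → Matrix (Fin n) (Fin n) ℝ) :
    Matrix (Fin n) (Fin n) ℝ →ₗ[ℝ] (Fin m → ℝ) where
  toFun M := fun i => (A i * M).trace
  map_add' M N := by ext i; simp [Matrix.mul_add]
  map_smul' c M := by ext i; simp

/-- the synthesis map -/
def PsiA {n m : ℕ} (A : Fin m → Matrix (Fin n) (Fin n) ℝ) :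
    (Fin m → ℝ) →ₗ[ℝ] Matrix (Fin n) (Fin n) ℝ where
  toFun y := ∑ i, y i • A i
  map_add' M N := by simp [add_smul, Finset.sum_add_distrib]
  map_smul' c M := by simp [Finset.smul_sum, smul_smul]

lemma tr_Psi {n m : ℕ} (A : Fin m → Matrix (Fin n) (Fin n) ℝ) (y : Fin m → ℝ)
    (X : Matrix (Fin n) (Fin n) ℝ) :
    ((∑ i, y i • A i) * X).trace = ∑ i, y i * (A i * X).trace := by
  rw [Finset.sum_mul, Matrix.trace_sum]
  simp

lemma Psi_symm {n m : ℕ} {A : Fin m → Matrix (Fin n) (Fin n) ℝ} (hA : ∀ i, (A i).IsSymm)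
    (y : Fin m → ℝ) : (∑ i, y i • A i).IsSymm := by
  unfold Matrix.IsSymm
  rw [Matrix.transpose_sum]
  refine Finset.sum_congr rfl fun i _ => ?_
  rw [transpose_smul, (hA i).eq]

lemma Psi_inj {n m : ℕ} {A : Fin m → Matrix (Fin n) (Fin n) ℝ} (hLI : LinearIndependent ℝ A)
    {y : Fin m → ℝ} (h : ∑ i, y i • A i = 0) : y = 0 := by
  funext i
  exact Fintype.linearIndependent_iff.1 hLI y h i

lemma Phi_surj {n m : ℕ} {A : Fin m → Matrix (Fin n) (Fin n) ℝ} (hA : ∀ i, (A i).IsSymm)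
    (hLI : LinearIndependent ℝ A) : Function.Surjective (PhiA A) := by
  have : Function.Surjective (PhiA A ∘ₗ PsiA A) := by
    rw [← LinearMap.injective_iff_surjective, injective_iff_map_eq_zero]
    intro w hw
    apply Psi_inj hLI
    apply eq_zero_of_tr_mul_transpose
    rw [(Psi_symm hA w).eq, tr_Psi]
    refine Finset.sum_eq_zero fun i _ => ?_
    have : (A i * ∑ i, w i • A i).trace = 0 := congrFun hw i
    rw [this, mul_zero]
  intro z
  obtain ⟨w, hw⟩ := this z
  exact ⟨_, hw⟩

lemma smul_symm {n : ℕ} {X : Matrix (Fin n) (Fin n) ℝ} (h : X.IsSymm) (c : ℝ) :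
    (c • X).IsSymm := by
  unfold Matrix.IsSymm
  rw [transpose_smul, h.eq]

lemma tr_symmetrize {n : ℕ} {D : Matrix (Fin n) (Fin n) ℝ} (hD : D.IsSymm)
    (M : Matrix (Fin n) (Fin n) ℝ) :
    (D * ((1/2 : ℝ) • (M + Mᵀ))).trace = (D * M).trace := by
  have : (D * Mᵀ).trace = (D * M).trace := by
    rw [← Matrix.trace_transpose, transpose_mul, transpose_transpose, hD.eq,
      Matrix.trace_mul_comm]
  rw [Matrix.mul_smul, Matrix.trace_smul, Matrix.mul_add, Matrix.trace_add, this, smul_eq_mul]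
  ring

/-- open convex cone of matrices whose symmetric part is positive definite -/
def Ucone (n : ℕ) : Set (Matrix (Fin n) (Fin n) ℝ) := {M | (M + Mᵀ).PosDef}

lemma Ucone_open (n : ℕ) : IsOpen (Ucone n) := by
  rw [isOpen_iff_mem_nhds]
  intro M hM
  obtain ⟨l, hl, h⟩ := pd_perturb (show (M + Mᵀ).PosDef from hM)
  have hc : Continuous (fun N : Matrix (Fin n) (Fin n) ℝ => l1 (N + Nᵀ - (M + Mᵀ))) :=
    l1_cont.comp (by fun_prop)
  have h0 : l1 (M + Mᵀ - (M + Mᵀ)) < l := by simpa [l1] using hl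
  filter_upwards [hc.continuousAt.eventually (gt_mem_nhds h0)] with N hN
  refine h _ ?_ hN
  unfold Matrix.IsSymm
  simp [add_comm]

lemma Ucone_convex (n : ℕ) : Convex ℝ (Ucone n) := by
  intro M hM N hN a b ha hb hab
  show (a • M + b • N + (a • M + b • N)ᵀ).PosDef
  have : a • M + b • N + (a • M + b • N)ᵀ = a • (M + Mᵀ) + b • (N + Nᵀ) := by
    simp only [transpose_add, transpose_smul, smul_add]; abel
  rw [this]
  rcases ha.eq_or_lt with rfl | ha
  · simp at hab
    have hN' : (N + Nᵀ).PosDef := hN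
    simpa [hab] using hN'
  · exact (hM.smul ha).add_posSemidef (hN.posSemidef.smul hb)

/-- the map used for the separation argument -/
def sepMap {n m : ℕ} (A : Fin m → Matrix (Fin n) (Fin n) ℝ) (D : Matrix (Fin n) (Fin n) ℝ) :
    (Matrix (Fin n) (Fin n) ℝ × ℝ) →ₗ[ℝ] ((Fin m → ℝ) × ℝ) where
  toFun p := (PhiA A p.1, (D * p.1).trace + p.2)
  map_add' p q := by
    ext <;> simp [Matrix.mul_add]; ring
  map_smul' c p := by
    ext <;> simp; ring

set_option maxHeartbeats 2000000 in
theorem strong_duality {n m : ℕ} {A : Fin m → Matrix (Fin n) (Fin n) ℝ} {b : Fin m → ℝ}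
    (hA : ∀ i, (A i).IsSymm) (hLI : LinearIndependent ℝ A)
    {X0 : Matrix (Fin n) (Fin n) ℝ} (hX0 : PrimalFeasible A b X0) (hX0p : X0.PosDef)
    {D : Matrix (Fin n) (Fin n) ℝ} (hD : D.IsSymm) (v : ℝ)
    (hv : ∀ X, PrimalFeasible A b X → v ≤ (D * X).trace) :
    ∃ y : Fin m → ℝ, (D - ∑ i, y i • A i).PosSemidef ∧ v ≤ ∑ i, b i * y i := by
  set L := sepMap A D with hL
  have hsurj : Function.Surjective L := by
    rintro ⟨z, t⟩
    obtain ⟨M, hM⟩ := Phi_surj hA hLI z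
    refine ⟨(M, t - (D * M).trace), ?_⟩
    ext <;> simp [L, sepMap, hM]
  have hopen : IsOpen (L '' (Ucone n ×ˢ Ioi (0:ℝ))) :=
    L.isOpenMap_of_finiteDimensional hsurj _ ((Ucone_open n).prod isOpen_Ioi)
  have hconv : Convex ℝ (L '' (Ucone n ×ˢ Ioi (0:ℝ))) :=
    ((Ucone_convex n).prod (convex_Ioi 0)).linear_image L
  have hnot : (b, v) ∉ L '' (Ucone n ×ˢ Ioi (0:ℝ)) := by
    rintro ⟨⟨M, s⟩, ⟨hM, hs⟩, he⟩
    have h1 : ∀ i, (A i * M).trace = b i := fun i => congrFun (congrArg Prod.fst he) i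
    have h2 : (D * M).trace + s = v := congrArg Prod.snd he
    have hp : ((1/2 : ℝ) • (M + Mᵀ)).PosSemidef :=
      (show (M + Mᵀ).PosDef from hM).posSemidef.smul (by norm_num)
    have := hv ((1/2 : ℝ) • (M + Mᵀ)) ⟨psd_symm hp, fun i => by
      rw [tr_symmetrize (hA i), h1], hp⟩
    rw [tr_symmetrize hD] at this
    simp only [mem_Ioi] at hs
    linarith
  obtain ⟨f, hf⟩ := geometric_hahn_banach_open_point hconv hopen hnot
  set w : Fin m → ℝ := fun i => f (Pi.single i 1, 0) with hw
  set τ : ℝ := f (0, 1) with hτ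
  have hfe : ∀ (z : Fin m → ℝ) (t : ℝ), f (z, t) = (∑ i, z i * w i) + t * τ := by
    intro z t
    have h1 : ((z, t) : (Fin m → ℝ) × ℝ) =
        (∑ i, z i • ((Pi.single i 1, 0) : (Fin m → ℝ) × ℝ)) + t • ((0, 1) : (Fin m → ℝ) × ℝ) := by
      ext i
      · simp [Prod.fst_sum, Pi.single_apply]
      · simp [Prod.snd_sum]
    rw [h1, map_add, map_sum, map_smul]
    simp only [map_smul, smul_eq_mul, hw, hτ]
  have key : ∀ M ∈ Ucone n, ∀ s : ℝ, 0 < s →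
      (∑ i, (A i * M).trace * w i) + ((D * M).trace + s) * τ < (∑ i, b i * w i) + v * τ := by
    intro M hM s hs
    have := hf (L (M, s)) ⟨(M, s), ⟨hM, hs⟩, rfl⟩
    rw [hfe, show L (M, s) = (PhiA A M, (D * M).trace + s) from rfl, hfe] at this
    exact this
  have hX0U : X0 ∈ Ucone n := by
    show (X0 + X0ᵀ).PosDef
    rw [hX0.1.eq]
    exact hX0p.add hX0p
  have hτneg : τ < 0 := by
    by_contra hc
    push Not at hc
    have h1 := key X0 hX0U (|v - (D * X0).trace| + 1) (by positivity)
    simp only [hX0.2.1] at h1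
    have h2 : v ≤ (D * X0).trace + (|v - (D * X0).trace| + 1) := by
      linarith [le_abs_self (v - (D * X0).trace)]
    nlinarith
  have hUscale : ∀ M ∈ Ucone n, ∀ c : ℝ, 0 < c → c • M ∈ Ucone n := by
    intro M hM c hc
    show (c • M + (c • M)ᵀ).PosDef
    rw [transpose_smul, ← smul_add]
    exact (show (M + Mᵀ).PosDef from hM).smul hc
  -- q M := ⟨Σ w A + τ D, M⟩
  set q : Matrix (Fin n) (Fin n) ℝ → ℝ := fun M => (∑ i, (A i * M).trace * w i) + (D * M).trace * τ
    with hq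
  have hqs : ∀ (c : ℝ) M, q (c • M) = c * q M := by
    intro c M
    simp only [hq, Matrix.mul_smul, Matrix.trace_smul, smul_eq_mul, mul_add, Finset.mul_sum]
    congr 1
    · exact Finset.sum_congr rfl fun i _ => by ring
    · ring
  set k := (∑ i, b i * w i) + v * τ with hk
  have key2 : ∀ M ∈ Ucone n, q M ≤ k := by
    intro M hM
    by_contra hc
    push Not at hc
    have h1 := key M hM ((q M - k) / (-τ)) (div_pos (by linarith) (by linarith))
    have h2 : (q M - k) / (-τ) * τ = -(q M - k) := by
      have : τ ≠ 0 := hτneg.ne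
      field_simp
    simp only [hq] at h1 h2 hc
    rw [add_mul, h2] at h1
    linarith
  have hk0 : 0 ≤ k := by
    by_contra hc
    push Not at hc
    have hb : 0 < |q X0| + 1 := by positivity
    have h1 := key2 _ (hUscale X0 hX0U (-k / (2 * (|q X0| + 1))) (by
      apply div_pos <;> linarith))
    rw [hqs] at h1
    have h2 : -k / (2 * (|q X0| + 1)) * q X0 ≥ k / 2 := by
      have h3 : -k / (2 * (|q X0| + 1)) * (|q X0| + 1) = -k / 2 := by
        field_simp
      have h4 : 0 < -k / (2 * (|q X0| + 1)) := by apply div_pos <;> linarith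
      nlinarith [neg_abs_le (q X0)]
    linarith
  have hqU : ∀ M ∈ Ucone n, q M ≤ 0 := by
    intro M hM
    by_contra hc
    push Not at hc
    have h1 := key2 _ (hUscale M hM ((k + 1) / q M) (by positivity))
    rw [hqs, div_mul_cancel₀ _ hc.ne'] at h1
    linarith
  have hqPSD : ∀ M : Matrix (Fin n) (Fin n) ℝ, M.PosSemidef → q M ≤ 0 := by
    intro M hM
    have h1 : ∀ d : ℝ, 0 < d → q M + d * q X0 ≤ 0 := by
      intro d hd
      have h2 : M + d • X0 ∈ Ucone n := by
        show (M + d • X0 + (M + d • X0)ᵀ).PosDef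
        rw [transpose_add, transpose_smul, (psd_symm hM).eq, hX0.1.eq]
        have : (M + d • X0).PosDef := Matrix.PosDef.posSemidef_add hM (hX0p.smul hd)
        exact this.add this
      have h3 := hqU _ h2
      have h4 : q (M + d • X0) = q M + q (d • X0) := by
        simp only [hq, Matrix.mul_add, Matrix.trace_add, add_mul, Finset.sum_add_distrib]
        ring
      rw [h4, hqs] at h3
      exact h3
    by_contra hc
    push Not at hc
    have hb : 0 < |q X0| + 1 := by positivity
    have h2 := h1 (q M / (2 * (|q X0| + 1))) (by positivity)
    have h3 : q M / (2 * (|q X0| + 1)) * (|q X0| + 1) = q M / 2 := by field_simp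
    have h4 : 0 < q M / (2 * (|q X0| + 1)) := by positivity
    nlinarith [neg_abs_le (q X0)]
  have hτ' : τ ≠ 0 := hτneg.ne
  refine ⟨fun i => w i / (-τ), ?_, ?_⟩
  · rw [psd_iff (hD.sub (Psi_symm hA _))]
    intro x
    rw [quad_eq_tr, Matrix.sub_mul, Matrix.trace_sub, tr_Psi]
    have h1 := hqPSD _ (vv_psd x)
    simp only [hq] at h1
    have h2 : ∑ i, w i / -τ * (A i * vecMulVec x x).trace =
        (∑ i, (A i * vecMulVec x x).trace * w i) / (-τ) := by
      rw [Finset.sum_div]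
      exact Finset.sum_congr rfl fun i _ => by ring
    rw [h2, sub_nonneg, div_le_iff₀ (by linarith)]
    linarith
  · have h2 : ∑ i, b i * (w i / -τ) = (∑ i, b i * w i) / (-τ) := by
      rw [Finset.sum_div]
      exact Finset.sum_congr rfl fun i _ => by ring
    rw [h2, le_div_iff₀ (by linarith)]
    linarith

end Duality

section SDP

variable {n m : ℕ} {C Cbar : Matrix (Fin n) (Fin n) ℝ}
  {A : Fin m → Matrix (Fin n) (Fin n) ℝ} {b : Fin m → ℝ}

lemma gap_eq {ε : ℝ} {X S : Matrix (Fin n) (Fin n) ℝ} {y : Fin m → ℝ}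
    (hX : PrimalFeasible A b X) (hS : DualFeasible C Cbar A ε y S) :
    ((C + ε • Cbar) * X).trace = ∑ i, b i * y i + (X * S).trace := by
  rw [← hS.2.1, Matrix.add_mul, Matrix.trace_add, tr_Psi, Matrix.trace_mul_comm S X]
  congr 1
  exact Finset.sum_congr rfl fun i _ => by rw [hX.2.1 i, mul_comm]

lemma Ceps_symm (hSA : StandingAssumptions C Cbar A b) (ε : ℝ) : (C + ε • Cbar).IsSymm :=
  hSA.1.add (smul_symm hSA.2.1 ε)

lemma opt_of_comp {ε : ℝ} {X S : Matrix (Fin n) (Fin n) ℝ} {y : Fin m → ℝ}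
    (hX : PrimalFeasible A b X) (hS : DualFeasible C Cbar A ε y S) (h : X * S = 0) :
    X ∈ PrimalOpt C Cbar A b ε ∧ (y, S) ∈ DualOpt C Cbar A b ε := by
  have h0 := gap_eq hX hS
  rw [h, Matrix.trace_zero, add_zero] at h0
  refine ⟨⟨hX, fun X' hX' => ?_⟩, ⟨hS, fun y' S' hS' => ?_⟩⟩
  · rw [h0, gap_eq hX' hS]
    have := tr_nonneg hX'.2.2 hS.2.2
    linarith
  · have h1 := gap_eq hX hS'
    have := tr_nonneg hX.2.2 hS'.2.2
    simp only
    linarith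

lemma dual_of_bound (hSA : StandingAssumptions C Cbar A b) {ε v : ℝ}
    (hv : ∀ X, PrimalFeasible A b X → v ≤ ((C + ε • Cbar) * X).trace) :
    ∃ y S, DualFeasible C Cbar A ε y S ∧ v ≤ ∑ i, b i * y i := by
  obtain ⟨-, -, hA, hLI, X0, -, -, hX0, hX0p, -⟩ := id hSA
  obtain ⟨y, hy, h⟩ := strong_duality hA hLI hX0 hX0p (Ceps_symm hSA ε) v hv
  exact ⟨y, _, ⟨psd_symm hy, by abel, hy⟩, h⟩

lemma comp_of_opt (hSA : StandingAssumptions C Cbar A b) {ε : ℝ}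
    {X S : Matrix (Fin n) (Fin n) ℝ} {y : Fin m → ℝ}
    (hX : X ∈ PrimalOpt C Cbar A b ε) (hS : (y, S) ∈ DualOpt C Cbar A b ε) : X * S = 0 := by
  obtain ⟨y', S', h1, h2⟩ := dual_of_bound hSA hX.2
  have h3 := hS.2 y' S' h1
  have h4 := gap_eq hX.1 hS.1
  have h5 := tr_nonneg hX.1.2.2 hS.1.2.2
  simp only at h3 h4 h5
  exact mul_eq_zero_of_tr hX.1.2.2 hS.1.2.2 (by linarith)

lemma dualOpt_nonempty (hSA : StandingAssumptions C Cbar A b) {ε : ℝ}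
    {X : Matrix (Fin n) (Fin n) ℝ} (hX : X ∈ PrimalOpt C Cbar A b ε) :
    (DualOpt C Cbar A b ε).Nonempty := by
  obtain ⟨y', S', h1, h2⟩ := dual_of_bound hSA hX.2
  have h4 := gap_eq hX.1 h1
  have h5 := tr_nonneg hX.1.2.2 h1.2.2
  exact ⟨_, (opt_of_comp hX.1 h1 (mul_eq_zero_of_tr hX.1.2.2 h1.2.2 (by linarith))).2⟩

lemma dual_of_mem_E (hSA : StandingAssumptions C Cbar A b) {ε : ℝ}
    (h : ε ∈ Eset C Cbar A b) : ∃ y S, DualFeasible C Cbar A ε y S := by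
  obtain ⟨r, -, hr⟩ := EReal.lt_iff_exists_real_btwn.1 (show ⊥ < vfun C Cbar A b ε from h)
  obtain ⟨y, S, h1, -⟩ := dual_of_bound hSA (ε := ε) (v := r) (fun X hX => by
    have : vfun C Cbar A b ε ≤ (((C + ε • Cbar) * X).trace : EReal) :=
      sInf_le ⟨X, hX, rfl⟩
    exact_mod_cast hr.le.trans this)
  exact ⟨y, S, h1⟩

lemma dual_comb {ε ε' a a' : ℝ} {y y' : Fin m → ℝ} {S S' : Matrix (Fin n) (Fin n) ℝ}
    (h : DualFeasible C Cbar A ε y S) (h' : DualFeasible C Cbar A ε' y' S') (ha : a + a' = 1)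
    (hp : (a • S + a' • S').PosSemidef) :
    DualFeasible C Cbar A (a * ε + a' * ε') (a • y + a' • y') (a • S + a' • S') := by
  refine ⟨psd_symm hp, ?_, hp⟩
  have h1 : (∑ i, (a • y + a' • y') i • A i) = a • (∑ i, y i • A i) + a' • (∑ i, y' i • A i) := by
    simp [add_smul, Finset.sum_add_distrib, Finset.smul_sum, smul_smul]
  have h2 : (∑ i, y i • A i) = C + ε • Cbar - S := by rw [← h.2.1]; abel
  have h3 : (∑ i, y' i • A i) = C + ε' • Cbar - S' := by rw [← h'.2.1]; abel
  have h4 : C = (a + a') • C := by rw [ha, one_smul]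
  rw [h1, h2, h3]
  conv_rhs => rw [h4]
  module

lemma strict_dual (hSA : StandingAssumptions C Cbar A b) {ε : ℝ}
    (h : ε ∈ interior (Eset C Cbar A b)) : ∃ y S, DualFeasible C Cbar A ε y S ∧ S.PosDef := by
  obtain ⟨X0, y0, S0, -, -, hS0, hS0p⟩ := hSA.2.2.2.2
  have hc : Continuous (fun s : ℝ => ε * (1 + s)) := by fun_prop
  have h1 : ∀ᶠ s in nhds (0:ℝ), ε * (1 + s) ∈ Eset C Cbar A b :=
    hc.continuousAt.eventually (by simpa using mem_interior_iff_mem_nhds.1 h)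
  obtain ⟨r, hr, hr2⟩ := Metric.eventually_nhds_iff.1 h1
  set s := r / 2 with hs
  have hs0 : 0 < s := by positivity
  obtain ⟨y1, S1, hS1⟩ := dual_of_mem_E hSA (hr2 (y := s) (by
    rw [Real.dist_eq, sub_zero, abs_of_pos hs0]; linarith))
  have hpd : ((s / (1 + s)) • S0 + (1 / (1 + s)) • S1).PosDef :=
    (hS0p.smul (by positivity)).add_posSemidef (hS1.2.2.smul (by positivity))
  have := dual_comb (a := s / (1 + s)) (a' := 1 / (1 + s)) hS0 hS1 (by field_simp; ring)
    hpd.posSemidef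
  have he : s / (1 + s) * 0 + 1 / (1 + s) * (ε * (1 + s)) = ε := by field_simp; ring
  rw [he] at this
  exact ⟨_, _, this, hpd⟩

/-- uniform coercivity near a point of the interior of `E` -/
lemma coercive (hSA : StandingAssumptions C Cbar A b) {ε₀ : ℝ}
    (h : ε₀ ∈ interior (Eset C Cbar A b)) :
    ∃ l c r : ℝ, 0 < l ∧ 0 < r ∧ ∀ ε, |ε - ε₀| < r → ∀ X, PrimalFeasible A b X →
      c + l * X.trace ≤ ((C + ε • Cbar) * X).trace := by
  obtain ⟨y, S, hS, hSp⟩ := strict_dual hSA h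
  obtain ⟨l, hl, hlow⟩ := pd_lower hSp
  have hn := l1_nonneg Cbar
  refine ⟨l / 2, ∑ i, b i * y i, l / 2 / (l1 Cbar + 1), by positivity, by positivity, ?_⟩
  intro ε hε X hX
  have h1 := gap_eq hX hS
  have h2 : C + ε • Cbar = (C + ε₀ • Cbar) + (ε - ε₀) • Cbar := by module
  rw [h2, Matrix.add_mul, Matrix.trace_add, h1, Matrix.smul_mul, Matrix.trace_smul, smul_eq_mul,
    Matrix.trace_mul_comm X S]
  have h3 := hlow X hX.2.2
  have h4 := abs_tr_le Cbar hX.2.2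
  have ht := hX.2.2.trace_nonneg
  rw [lt_div_iff₀ (by positivity)] at hε
  have h5 : |(ε - ε₀) * (Cbar * X).trace| ≤ l / 2 * X.trace := by
    rw [abs_mul]
    calc _ ≤ |ε - ε₀| * (l1 Cbar * X.trace) := by gcongr
      _ ≤ |ε - ε₀| * ((l1 Cbar + 1) * X.trace) := by gcongr; linarith
      _ = (|ε - ε₀| * (l1 Cbar + 1)) * X.trace := by ring
      _ ≤ _ := by gcongr
  have := (abs_le.1 h5).1
  linarith

lemma box_compact (R : ℝ) : IsCompact {X : Matrix (Fin n) (Fin n) ℝ | ∀ i j, |X i j| ≤ R} := by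
  have : IsCompact (Set.univ.pi fun _ : Fin n => Set.univ.pi fun _ : Fin n => Icc (-R) R) :=
    isCompact_univ_pi fun _ => isCompact_univ_pi fun _ => isCompact_Icc
  have he : {X : Matrix (Fin n) (Fin n) ℝ | ∀ i j, |X i j| ≤ R} =
      (Set.univ.pi fun _ : Fin n => Set.univ.pi fun _ : Fin n => Icc (-R) R) := by
    ext X
    exact ⟨fun h i _ j _ => abs_le.1 (h i j), fun h i j => abs_le.2 (h i trivial j trivial)⟩
  rw [he]
  exact this

lemma primalFeasible_closed : IsClosed {X | PrimalFeasible A b X} := by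
  have : {X | PrimalFeasible A b X} = {X | Xᵀ = X} ∩ ((⋂ i, {X | (A i * X).trace = b i}) ∩
      {X | X.PosSemidef}) := by
    ext X
    simp [PrimalFeasible, Matrix.IsSymm]
  rw [this]
  refine IsClosed.inter (isClosed_eq (by fun_prop) continuous_id)
    (IsClosed.inter (isClosed_iInter fun i => isClosed_eq (by fun_prop) continuous_const)
      psd_isClosed)

lemma primalOpt_nonempty (hSA : StandingAssumptions C Cbar A b) {ε : ℝ}
    (h : ε ∈ interior (Eset C Cbar A b)) : (PrimalOpt C Cbar A b ε).Nonempty := by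
  obtain ⟨X0, -, -, hX0, -⟩ := hSA.2.2.2.2
  obtain ⟨l, c, r, hl, hr, hco⟩ := coercive hSA h
  set g : Matrix (Fin n) (Fin n) ℝ → ℝ := fun X => ((C + ε • Cbar) * X).trace with hg
  have hgc : Continuous g := by fun_prop
  set K := {X | PrimalFeasible A b X} ∩ {X | g X ≤ g X0} with hK
  have hKc : IsClosed K := primalFeasible_closed.inter (isClosed_le hgc continuous_const)
  have hKK : IsCompact K := by
    refine (box_compact ((g X0 - c) / l)).of_isClosed_subset hKc ?_
    rintro X ⟨hX, hX2⟩ i j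
    refine (entry_le hX.2.2 i j).trans ?_
    rw [le_div_iff₀ hl]
    have := hco ε (by simpa using hr) X hX
    simp only [hg, Set.mem_ofPred_eq] at hX2 ⊢
    linarith
  obtain ⟨X, hX, hmin⟩ := hKK.exists_isMinOn ⟨X0, hX0, le_refl (g X0)⟩ hgc.continuousOn
  refine ⟨X, hX.1, fun X' hX' => ?_⟩
  by_cases h' : g X' ≤ g X0
  · exact hmin ⟨hX', h'⟩
  · exact le_trans (show g X ≤ g X0 from hX.2) (not_le.1 h').le

lemma primalOpt_convex (ε : ℝ) : Convex ℝ (PrimalOpt C Cbar A b ε) := by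
  intro X hX X' hX' a a' ha ha' haa
  have hp : (a • X + a' • X').PosSemidef := (hX.1.2.2.smul ha).add (hX'.1.2.2.smul ha')
  refine ⟨⟨psd_symm hp, fun i => ?_, hp⟩, fun Y hY => ?_⟩
  · simp only [Matrix.mul_add, Matrix.mul_smul, Matrix.trace_add, Matrix.trace_smul, hX.1.2.1,
      hX'.1.2.1, smul_eq_mul]
    rw [← add_mul, haa, one_mul]
  · have h1 := hX.2 Y hY
    have h2 := hX'.2 Y hY
    simp only [Matrix.mul_add, Matrix.mul_smul, Matrix.trace_add, Matrix.trace_smul, smul_eq_mul]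
    have h3 : ((C + ε • Cbar) * Y).trace =
      a * ((C + ε • Cbar) * Y).trace + a' * ((C + ε • Cbar) * Y).trace := by
        rw [← add_mul, haa, one_mul]
    rw [h3]
    gcongr

lemma dualOpt_convex (ε : ℝ) : Convex ℝ (DualOpt C Cbar A b ε) := by
  rintro ⟨y, S⟩ hS ⟨y', S'⟩ hS' a a' ha ha' haa
  have hp : (a • S + a' • S').PosSemidef := (hS.1.2.2.smul ha).add (hS'.1.2.2.smul ha')
  have h1 := dual_comb hS.1 hS'.1 haa hp
  have h2 : a * ε + a' * ε = ε := by rw [← add_mul, haa, one_mul]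
  rw [h2] at h1
  refine ⟨h1, fun y'' S'' h'' => ?_⟩
  have h3 := hS.2 y'' S'' h''
  have h4 := hS'.2 y'' S'' h''
  have h5 : ∑ i, b i * (a • (y, S) + a' • (y', S')).1 i =
      a * ∑ i, b i * y i + a' * ∑ i, b i * y' i := by
    simp only [Finset.mul_sum, ← Finset.sum_add_distrib]
    exact Finset.sum_congr rfl fun i _ => by simp; ring
  rw [h5]
  have h6 : ∑ i, b i * y'' i = a * ∑ i, b i * y'' i + a' * ∑ i, b i * y'' i := by
    rw [← add_mul, haa, one_mul]
  rw [h6]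
  simp only at h3 h4
  gcongr

lemma relint_primal {s : Set (Matrix (Fin n) (Fin n) ℝ)} (h : Convex ℝ s) (hne : s.Nonempty) :
    (intrinsicInterior ℝ s).Nonempty := by
  let _ : NormedAddCommGroup (Matrix (Fin n) (Fin n) ℝ) := Matrix.normedAddCommGroup
  let _ : NormedSpace ℝ (Matrix (Fin n) (Fin n) ℝ) := Matrix.normedSpace
  exact hne.intrinsicInterior h

lemma relint_dual {s : Set ((Fin m → ℝ) × Matrix (Fin n) (Fin n) ℝ)} (h : Convex ℝ s)
    (hne : s.Nonempty) : (intrinsicInterior ℝ s).Nonempty := by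
  let _ : NormedAddCommGroup (Matrix (Fin n) (Fin n) ℝ) := Matrix.normedAddCommGroup
  let _ : NormedSpace ℝ (Matrix (Fin n) (Fin n) ℝ) := Matrix.normedSpace
  exact hne.intrinsicInterior h

lemma maxComp_exists (hSA : StandingAssumptions C Cbar A b) {ε : ℝ}
    (h : ε ∈ interior (Eset C Cbar A b)) : ∃ X y S, MaxComp C Cbar A b ε X y S := by
  obtain ⟨X, hX⟩ := primalOpt_nonempty hSA h
  obtain ⟨X', hX'⟩ := relint_primal (primalOpt_convex ε) ⟨X, hX⟩
  obtain ⟨⟨y, S⟩, hS⟩ := relint_dual (dualOpt_convex ε) (dualOpt_nonempty hSA hX)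
  exact ⟨X', y, S, hX', hS⟩

lemma maxComp_opt {ε : ℝ} {X S : Matrix (Fin n) (Fin n) ℝ} {y : Fin m → ℝ}
    (h : MaxComp C Cbar A b ε X y S) :
    X ∈ PrimalOpt C Cbar A b ε ∧ (y, S) ∈ DualOpt C Cbar A b ε :=
  ⟨intrinsicInterior_subset h.1, intrinsicInterior_subset h.2⟩

end SDP

section Jac

variable {n m : ℕ} {C Cbar : Matrix (Fin n) (Fin n) ℝ}
  {A : Fin m → Matrix (Fin n) (Fin n) ℝ} {b : Fin m → ℝ}

/-- symmetric matrices as a submodule -/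
def SymSub (n : ℕ) : Submodule ℝ (Matrix (Fin n) (Fin n) ℝ) where
  carrier := {M | M.IsSymm}
  add_mem' h1 h2 := Matrix.IsSymm.add h1 h2
  zero_mem' := Matrix.isSymm_zero
  smul_mem' c _ h := smul_symm h c

lemma symm_sum {X S DX DS : Matrix (Fin n) (Fin n) ℝ} (hX : X.IsSymm) (hS : S.IsSymm)
    (hDX : DX.IsSymm) (hDS : DS.IsSymm) : (DX * S + S * DX + X * DS + DS * X).IsSymm := by
  unfold Matrix.IsSymm
  simp only [transpose_add, transpose_mul, hX.eq, hS.eq, hDX.eq, hDS.eq]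
  abel

/-- reduced Jacobian as an endomorphism -/
def Jred (hA : ∀ i, (A i).IsSymm) {X S : Matrix (Fin n) (Fin n) ℝ} (hX : X.IsSymm)
    (hS : S.IsSymm) : (SymSub n × (Fin m → ℝ)) →ₗ[ℝ] (SymSub n × (Fin m → ℝ)) where
  toFun p := (⟨p.1.1 * S + S * p.1.1 + X * (-(PsiA A p.2)) + (-(PsiA A p.2)) * X,
    symm_sum hX hS p.1.2 (Psi_symm hA p.2).neg⟩, PhiA A p.1.1)
  map_add' p q := by
    refine Prod.ext (Subtype.ext ?_) ?_
    · simp only [Prod.fst_add, Prod.snd_add, Submodule.coe_add, map_add, Matrix.add_mul,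
        Matrix.mul_add, neg_add]
      abel
    · simp
  map_smul' c p := by
    refine Prod.ext (Subtype.ext ?_) ?_
    · simp [smul_add]
    · simp

lemma J_ker (hA : ∀ i, (A i).IsSymm) {X S : Matrix (Fin n) (Fin n) ℝ} (hX : X.IsSymm)
    (hS : S.IsSymm) (hJ : JNonsingular A X S) :
    ∀ x, X *ᵥ x = 0 → S *ᵥ x = 0 → x = 0 := by
  have hsurj : Function.Surjective (Jred hA hX hS) := by
    rw [← LinearMap.injective_iff_surjective, injective_iff_map_eq_zero]
    rintro ⟨⟨DX, hDX⟩, Dy⟩ h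
    have h1 := congrArg (fun p => (p.1 : Matrix (Fin n) (Fin n) ℝ)) h
    have h2 := congrArg Prod.snd h
    obtain ⟨h3, h4, -⟩ := hJ DX (-(PsiA A Dy)) Dy hDX (Psi_symm hA Dy).neg
      (fun i => congrFun h2 i) (add_neg_cancel _) h1
    subst h3 h4
    rfl
  intro x hx hs
  obtain ⟨⟨⟨DX, hDX⟩, Dy⟩, h⟩ := hsurj (⟨vecMulVec x x, psd_symm (vv_psd x)⟩, 0)
  have h1 := congrArg (fun p => (p.1 : Matrix (Fin n) (Fin n) ℝ)) h
  simp only [Jred, LinearMap.coe_mk, AddHom.coe_mk] at h1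
  have hx' : x ᵥ* X = 0 := by rw [← hx, ← hX.eq, Matrix.vecMul_transpose, hX.eq]
  have hs' : x ᵥ* S = 0 := by rw [← hs, ← hS.eq, Matrix.vecMul_transpose, hS.eq]
  have h2 := congrArg (fun M => x ⬝ᵥ (M *ᵥ x)) h1
  simp only [Matrix.add_mulVec, dotProduct_add, ← Matrix.mulVec_mulVec, hx, hs,
    Matrix.mulVec_zero, dotProduct_zero] at h2
  rw [Matrix.dotProduct_mulVec x S, hs', Matrix.dotProduct_mulVec x X, hx'] at h2
  simp only [zero_dotProduct, add_zero] at h2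
  rw [Matrix.vecMulVec_mulVec, dotProduct_smul] at h2
  have h3 : (x ⬝ᵥ x) = 0 := by simpa using h2.symm
  exact dotProduct_self_eq_zero.1 h3

/-- uniqueness of optimal solutions from nonsingularity of the Jacobian -/
lemma J_unique (hSA : StandingAssumptions C Cbar A b) {ε : ℝ}
    {X S X' S' : Matrix (Fin n) (Fin n) ℝ} {y y' : Fin m → ℝ}
    (hX : X ∈ PrimalOpt C Cbar A b ε) (hS : (y, S) ∈ DualOpt C Cbar A b ε)
    (hX' : X' ∈ PrimalOpt C Cbar A b ε) (hS' : (y', S') ∈ DualOpt C Cbar A b ε)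
    (hJ : JNonsingular A X S) : X' = X ∧ S' = S := by
  have c1 := comp_of_opt hSA hX hS
  have c2 := comp_of_opt hSA hX' hS
  have c3 := comp_of_opt hSA hX hS'
  have d1 := mul_comm_zero hX.1.1 hS.1.1 c1
  have d2 := mul_comm_zero hX'.1.1 hS.1.1 c2
  have d3 := mul_comm_zero hX.1.1 hS'.1.1 c3
  simp only at d1 d2 d3
  constructor
  · have := (hJ (X' - X) 0 0 (hX'.1.1.sub hX.1.1) Matrix.isSymm_zero (fun i => by
      rw [Matrix.mul_sub, Matrix.trace_sub, hX.1.2.1, hX'.1.2.1, sub_self]) (by simp) (by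
      simp [Matrix.mul_sub, Matrix.sub_mul, c1, c2, d1, d2])).1
    exact sub_eq_zero.1 this
  · have := (hJ 0 (S' - S) (y' - y) Matrix.isSymm_zero (hS'.1.1.sub hS.1.1) (fun i => by
      simp) (by
      have h1 := hS.1.2.1
      have h2 := hS'.1.2.1
      simp only at h1 h2
      have h3 := h2.trans h1.symm
      simp only [Pi.sub_apply, sub_smul, Finset.sum_sub_distrib]
      rw [← sub_eq_zero] at h3
      rw [← h3]; abel) (by
      simp [Matrix.mul_sub, Matrix.sub_mul, c1, c3, d1, d3])).2.2
    exact sub_eq_zero.1 this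

lemma symm_ker_of_range {S S' : Matrix (Fin n) (Fin n) ℝ} (hS : S.IsSymm) (hS' : S'.IsSymm)
    (h : LinearMap.range S.mulVecLin ≤ LinearMap.range S'.mulVecLin) {x : Fin n → ℝ}
    (hx : S' *ᵥ x = 0) : S *ᵥ x = 0 := by
  have hx' : x ᵥ* S' = 0 := by rw [← hx, ← hS'.eq, Matrix.vecMul_transpose, hS'.eq]
  obtain ⟨w, hw⟩ := h ⟨S *ᵥ x, rfl⟩
  simp only [Matrix.mulVecLin_apply] at hw
  have h2 : x ⬝ᵥ (S *ᵥ (S *ᵥ x)) = (S *ᵥ x) ⬝ᵥ (S *ᵥ x) := by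
    rw [Matrix.dotProduct_mulVec, ← Matrix.mulVec_transpose, hS.eq]
  rw [← hw, Matrix.dotProduct_mulVec, hx', zero_dotProduct] at h2
  exact dotProduct_self_eq_zero.1 h2.symm

lemma factor_of_ker {f g : (Fin n → ℝ) →ₗ[ℝ] (Fin n → ℝ)}
    (h : LinearMap.ker g ≤ LinearMap.ker f) : ∃ t : (Fin n → ℝ) →ₗ[ℝ] (Fin n → ℝ), f = t ∘ₗ g := by
  let e := g.quotKerEquivRange
  let t0 : LinearMap.range g →ₗ[ℝ] (Fin n → ℝ) := ((LinearMap.ker g).liftQ f h) ∘ₗ e.symm.toLinearMap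
  obtain ⟨t, ht⟩ := LinearMap.exists_extend t0
  refine ⟨t, LinearMap.ext fun x => ?_⟩
  have h1 : t (g x) = t0 ⟨g x, ⟨x, rfl⟩⟩ := by
    rw [← ht]; rfl
  rw [LinearMap.comp_apply, h1]
  have h2 : e.symm ⟨g x, ⟨x, rfl⟩⟩ = Submodule.Quotient.mk x := by
    rw [LinearEquiv.symm_apply_eq]; rfl
  simp only [t0, LinearMap.comp_apply, LinearEquiv.coe_coe, h2]
  rfl

lemma dominate {S S' : Matrix (Fin n) (Fin n) ℝ} (hS : S.PosSemidef) (hS' : S'.PosSemidef)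
    (h : ∀ x, S' *ᵥ x = 0 → S *ᵥ x = 0) : ∃ c : ℝ, 0 < c ∧ (S' - c • S).PosSemidef := by
  obtain ⟨R, hR⟩ := psd_factor hS'
  obtain ⟨B, hB⟩ := psd_factor hS
  have hk : LinearMap.ker R.mulVecLin ≤ LinearMap.ker B.mulVecLin := by
    intro x hx
    rw [LinearMap.mem_ker, Matrix.mulVecLin_apply] at hx ⊢
    have h1 : S' *ᵥ x = 0 := by rw [hR, ← Matrix.mulVec_mulVec, hx, Matrix.mulVec_zero]
    have h2 := h x h1
    have h3 : (B *ᵥ x) ⬝ᵥ (B *ᵥ x) = 0 := by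
      rw [Matrix.dotProduct_mulVec, ← Matrix.mulVec_transpose, Matrix.mulVec_mulVec, ← hB, h2,
        zero_dotProduct]
    exact dotProduct_self_eq_zero.1 h3
  obtain ⟨t, ht⟩ := factor_of_ker hk
  set T := LinearMap.toMatrix' t with hT
  have hBT : B = T * R := by
    have h1 := congrArg LinearMap.toMatrix' ht
    rw [LinearMap.toMatrix'_comp] at h1
    have e : ∀ M : Matrix (Fin n) (Fin n) ℝ, LinearMap.toMatrix' M.mulVecLin = M :=
      fun M => LinearMap.toMatrix'_toLin' M
    rwa [e, e] at h1
  have hn := l1_nonneg (Tᵀ * T)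
  refine ⟨(l1 (Tᵀ * T) + 1)⁻¹, by positivity, ?_⟩
  rw [psd_iff ((psd_symm hS').sub (smul_symm (psd_symm hS) _))]
  intro x
  rw [quad_eq_tr, Matrix.sub_mul, Matrix.trace_sub, Matrix.smul_mul, Matrix.trace_smul,
    smul_eq_mul, sub_nonneg, inv_mul_le_iff₀ (by positivity)]
  have h1 := abs_tr_le (Tᵀ * T) (psd_conj (vv_psd x) R)
  have h2 : (Tᵀ * T * (R * vecMulVec x x * Rᵀ)).trace = (S * vecMulVec x x).trace := by
    rw [hB, hBT, transpose_mul, ← Matrix.mul_assoc, Matrix.trace_mul_comm]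
    simp only [Matrix.mul_assoc]
  have h3 : (R * vecMulVec x x * Rᵀ).trace = (S' * vecMulVec x x).trace := by
    rw [hR, Matrix.trace_mul_comm]
    simp only [Matrix.mul_assoc]
  rw [h2, h3] at h1
  have h4 := le_of_abs_le h1
  have h5 := tr_nonneg hS' (vv_psd x)
  linarith

lemma rank_ge_of_ker {X S : Matrix (Fin n) (Fin n) ℝ}
    (h : ∀ x, X *ᵥ x = 0 → S *ᵥ x = 0 → x = 0) :
    n ≤ Module.finrank ℝ (LinearMap.range X.mulVecLin) +
      Module.finrank ℝ (LinearMap.range S.mulVecLin) := by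
  have h1 := LinearMap.finrank_range_add_finrank_ker X.mulVecLin
  have h2 := LinearMap.finrank_range_add_finrank_ker S.mulVecLin
  have hd : LinearMap.ker X.mulVecLin ⊓ LinearMap.ker S.mulVecLin = ⊥ := by
    rw [eq_bot_iff]
    rintro x ⟨hx, hs⟩
    exact h x (by simpa using hx) (by simpa using hs)
  have h3 := Submodule.finrank_sup_add_finrank_inf_eq (LinearMap.ker X.mulVecLin)
    (LinearMap.ker S.mulVecLin)
  rw [hd, finrank_bot] at h3
  have h4 := Submodule.finrank_le (LinearMap.ker X.mulVecLin ⊔ LinearMap.ker S.mulVecLin)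
  simp only [Module.finrank_fin_fun] at h1 h2 h4
  omega

lemma ker_of_rank_ge {X S : Matrix (Fin n) (Fin n) ℝ} (hX : X.IsSymm) (hS : S.IsSymm)
    (hXS : X * S = 0)
    (h : n ≤ Module.finrank ℝ (LinearMap.range X.mulVecLin) +
      Module.finrank ℝ (LinearMap.range S.mulVecLin)) :
    ∀ x, X *ᵥ x = 0 → S *ᵥ x = 0 → x = 0 := by
  have hd : Disjoint (LinearMap.range X.mulVecLin) (LinearMap.range S.mulVecLin) := by
    rw [Submodule.disjoint_def]
    rintro w ⟨a, rfl⟩ ⟨c, hc⟩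
    simp only [Matrix.mulVecLin_apply] at hc ⊢
    apply dotProduct_self_eq_zero.1
    nth_rw 2 [← hc]
    rw [Matrix.dotProduct_mulVec, ← Matrix.mulVec_transpose, hS.eq, Matrix.mulVec_mulVec,
      mul_comm_zero hX hS hXS]
    simp
  have ht := Submodule.eq_top_of_disjoint _ _ (by simpa using h) hd
  intro x hx hs
  have hx' : x ᵥ* X = 0 := by rw [← hx, ← hX.eq, Matrix.vecMul_transpose, hX.eq]
  have hs' : x ᵥ* S = 0 := by rw [← hs, ← hS.eq, Matrix.vecMul_transpose, hS.eq]
  have : x ∈ LinearMap.range X.mulVecLin ⊔ LinearMap.range S.mulVecLin := by rw [ht]; trivial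
  obtain ⟨u, ⟨a, rfl⟩, w, ⟨c, rfl⟩, hsum⟩ := Submodule.mem_sup.1 this
  apply dotProduct_self_eq_zero.1
  nth_rw 2 [← hsum]
  simp only [Matrix.mulVecLin_apply]
  rw [dotProduct_add, Matrix.dotProduct_mulVec, Matrix.dotProduct_mulVec, hx', hs']
  simp

end Jac

section PartOne

variable {n m : ℕ} {C Cbar : Matrix (Fin n) (Fin n) ℝ}
  {A : Fin m → Matrix (Fin n) (Fin n) ℝ} {b : Fin m → ℝ}

lemma comb_psd {S S' : Matrix (Fin n) (Fin n) ℝ} (hS : S.PosSemidef) (hS' : S'.PosSemidef)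
    {c t : ℝ} (hc : 0 < c) (hd : (S' - c • S).PosSemidef) (ht0 : 0 ≤ t) (ht : t ≤ 1 + c) :
    ((1 - t) • S + t • S').PosSemidef := by
  by_cases h1 : t ≤ 1
  · exact (hS.smul (sub_nonneg.2 h1)).add (hS'.smul ht0)
  · push Not at h1
    have h2 : (t - 1) / c ≤ 1 := by rw [div_le_one hc]; linarith
    have h3 : 0 ≤ (t - 1) / c := div_nonneg (by linarith) hc.le
    have e : (1 - t) • S + t • S' = (t - (t - 1) / c) • S' + ((t - 1) / c) • (S' - c • S) := by
      rw [smul_sub, smul_smul, div_mul_cancel₀ _ hc.ne', sub_smul, sub_smul, sub_smul, one_smul]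
      abel
    rw [e]
    exact (hS'.smul (by linarith)).add (hd.smul h3)

lemma strict_of_ker {ε : ℝ} {X S : Matrix (Fin n) (Fin n) ℝ} {y : Fin m → ℝ}
    (h : MaxComp C Cbar A b ε X y S) (hk : ∀ x, X *ᵥ x = 0 → S *ᵥ x = 0 → x = 0) :
    HasStrictComp C Cbar A b ε := by
  obtain ⟨h1, h2⟩ := maxComp_opt h
  exact ⟨X, y, S, h1, h2, (add_pd_iff h1.1.2.2 h2.1.2.2).2 hk⟩

lemma part_one (hSA : StandingAssumptions C Cbar A b)
    {I : Set ℝ} (hIsub : I ⊆ interior (Eset C Cbar A b))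
    (hreg : ∀ ε ∈ I, ∃ (X S : Matrix (Fin n) (Fin n) ℝ) (y : Fin m → ℝ),
      MaxComp C Cbar A b ε X y S ∧ JNonsingular A X S)
    {εbar : ℝ} (hεbar : εbar ∈ interior (Eset C Cbar A b)) (hcl : εbar ∈ closure I)
    (hns : ¬ HasStrictComp C Cbar A b εbar) : IsTransitionPoint C Cbar A b εbar := by
  have hA := hSA.2.2.1
  have hnear : ∀ ξ : ℝ, 0 < ξ → ∃ e ∈ I, |e - εbar| < ξ := by
    intro ξ hξ
    obtain ⟨e, he, h⟩ := Metric.mem_closure_iff.1 hcl ξ hξ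
    exact ⟨e, he, by rwa [dist_comm, Real.dist_eq] at h⟩
  refine ⟨hεbar, ?_, ?_⟩
  · rintro ε hε hne ⟨X, y, S, X', y', S', h, h', hrX, hrS⟩
    apply hns
    refine strict_of_ker h' ?_
    obtain ⟨hX, hS⟩ := maxComp_opt h
    obtain ⟨hX', hS'⟩ := maxComp_opt h'
    have hXS := comp_of_opt hSA hX hS
    have kX : ∀ x, X' *ᵥ x = 0 → X *ᵥ x = 0 := fun x =>
      symm_ker_of_range hX.1.1 hX'.1.1 hrX.le
    have kS : ∀ x, S' *ᵥ x = 0 → S *ᵥ x = 0 := fun x =>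
      symm_ker_of_range hS.1.1 hS'.1.1 hrS.le
    have hXS' : X * S' = 0 := by
      apply Matrix.ext_of_mulVec_single
      intro i
      obtain ⟨w, hw⟩ := hrS.ge ⟨Pi.single i 1, rfl⟩
      simp only [Matrix.mulVecLin_apply] at hw
      rw [← Matrix.mulVec_mulVec, ← hw, Matrix.mulVec_mulVec, hXS]
      simp only [Matrix.zero_mulVec]
    obtain ⟨c, hc, hd⟩ := dominate hS.1.2.2 hS'.1.2.2 kS
    have hne' : 0 < |εbar - ε| := abs_pos.2 (sub_ne_zero.2 (Ne.symm hne))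
    obtain ⟨e, heI, he⟩ := hnear (min c 1 * |εbar - ε|) (by positivity)
    set t := (e - ε) / (εbar - ε) with ht
    have hne2 : εbar - ε ≠ 0 := sub_ne_zero.2 (Ne.symm hne)
    have ht1 : |t - 1| < min c 1 := by
      have : t - 1 = (e - εbar) / (εbar - ε) := by rw [ht]; field_simp; ring
      rw [this, abs_div, div_lt_iff₀ hne']
      exact he
    have ht2 := abs_lt.1 ht1
    have m1 := min_le_left c 1
    have m2 := min_le_right c 1
    have hp : ((1 - t) • S + t • S').PosSemidef :=
      comb_psd hS.1.2.2 hS'.1.2.2 hc hd (by linarith) (by linarith)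
    have hfe := dual_comb hS.1 hS'.1 (by ring : (1 - t) + t = 1) hp
    have hee : (1 - t) * ε + t * εbar = e := by
      have : t * (εbar - ε) = e - ε := div_mul_cancel₀ _ hne2
      linarith
    rw [hee] at hfe
    have hcomp : X * ((1 - t) • S + t • S') = 0 := by
      rw [Matrix.mul_add, Matrix.mul_smul, Matrix.mul_smul, hXS, hXS']
      simp
    obtain ⟨o1, o2⟩ := opt_of_comp hX.1 hfe hcomp
    obtain ⟨Xe, Se, ye, hm, hJ⟩ := hreg e heI
    obtain ⟨p1, p2⟩ := maxComp_opt hm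
    obtain ⟨q1, q2⟩ := J_unique hSA p1 p2 o1 o2 hJ
    have hk := J_ker hA p1.1.1 p2.1.1 hJ
    intro x hx hs
    apply hk x
    · rw [← q1]; exact kX x hx
    · rw [← q2, Matrix.add_mulVec, Matrix.smul_mulVec, Matrix.smul_mulVec, hs, kS x hs]
      simp
  · intro ξ hξ
    obtain ⟨e, heI, he⟩ := hnear ξ hξ
    have := abs_lt.1 he
    refine ⟨e, ⟨⟨by linarith, by linarith⟩, hIsub heI⟩, fun hdm => hns ?_⟩
    obtain ⟨X, S, y, hm, hJ⟩ := hreg e heI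
    obtain ⟨X', y', S', hm'⟩ := maxComp_exists hSA hεbar
    obtain ⟨p1, p2⟩ := maxComp_opt hm
    obtain ⟨p1', p2'⟩ := maxComp_opt hm'
    have hr := rank_ge_of_ker (J_ker hA p1.1.1 p2.1.1 hJ)
    obtain ⟨d1, d2⟩ := hdm _ _ _ _ _ _ hm hm'
    rw [d1, d2] at hr
    exact strict_of_ker hm' (ker_of_rank_ge p1'.1.1 p2'.1.1 (comp_of_opt hSA p1' p2') hr)

end PartOne

section JStrict

variable {n m : ℕ} {C Cbar : Matrix (Fin n) (Fin n) ℝ}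
  {A : Fin m → Matrix (Fin n) (Fin n) ℝ} {b : Fin m → ℝ}

lemma sandwich_zero {X W : Matrix (Fin n) (Fin n) ℝ} (hX : X.PosSemidef) (hW : W.IsSymm)
    (h : X * W + W * X = 0) : W * X = 0 := by
  obtain ⟨R, hR⟩ := psd_factor hX
  have h1 : (W * X * W).trace = 0 := by
    have e1 : X * W = -(W * X) := eq_neg_of_add_eq_zero_left h
    have e2 : (W * X * W).trace = -(W * X * W).trace := by
      nth_rw 1 [Matrix.mul_assoc, e1, Matrix.mul_neg, Matrix.trace_neg,
        Matrix.trace_mul_comm]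
    linarith
  have h2 : W * Rᵀ = 0 := by
    apply eq_zero_of_tr_mul_transpose
    rw [transpose_mul, transpose_transpose, hW.eq, ← h1, hR]
    simp only [Matrix.mul_assoc]
  rw [hR, ← Matrix.mul_assoc, h2, Matrix.zero_mul]

lemma zero_of_quad {G M S : Matrix (Fin n) (Fin n) ℝ} (hG : G.PosDef) (hS : S.PosSemidef)
    (hM : M.IsSymm) (h : (M * G * M * S).trace = 0) : M * S = 0 := by
  have h0 : (M * G * M).PosSemidef := by
    have := psd_conj hG.posSemidef M
    rwa [hM.eq] at this
  have h1 := mul_eq_zero_of_tr h0 hS h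
  obtain ⟨Q, hQ⟩ := psd_factor hG.posSemidef
  have h2 : Q * M * S = 0 := by
    apply eq_zero_of_transpose_mul
    simp only [transpose_mul, hM.eq]
    rw [hQ] at h1
    simp only [Matrix.mul_assoc] at h1 ⊢
    rw [h1, Matrix.mul_zero]
  have h3 : G * (M * S) = 0 := by
    rw [hQ]
    simp only [Matrix.mul_assoc] at h2 ⊢
    rw [h2, Matrix.mul_zero]
  have hu := hG.isUnit
  exact (hu.mul_right_eq_zero).1 h3

lemma strict_block {X S DX DS : Matrix (Fin n) (Fin n) ℝ} (hX : X.PosSemidef)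
    (hS : S.PosSemidef) (hXS : X * S = 0) (hD : (X + S).PosDef)
    (hDX : DX.IsSymm) (hDS : DS.IsSymm) (htr : (DX * DS).trace = 0)
    (h : DX * S + S * DX + X * DS + DS * X = 0) : DX * S = 0 ∧ X * DS = 0 := by
  have hsX := psd_symm hX
  have hsS := psd_symm hS
  have hSX := mul_comm_zero hsX hsS hXS
  have hu := hD.isUnit
  have hXS' : ∀ M : Matrix (Fin n) (Fin n) ℝ, X * (S * M) = 0 := fun M => by
    rw [← Matrix.mul_assoc, hXS, Matrix.zero_mul]
  have hSX' : ∀ M : Matrix (Fin n) (Fin n) ℝ, S * (X * M) = 0 := fun M => by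
    rw [← Matrix.mul_assoc, hSX, Matrix.zero_mul]
  have w1 : X * DS * X = 0 := by
    have hW : (X * DS * X).IsSymm := by
      unfold Matrix.IsSymm
      simp only [transpose_mul, hsX.eq, hDS.eq, Matrix.mul_assoc]
    have e : X * (X * DS * X) + X * DS * X * X = 0 := by
      have := congrArg (fun M => X * M * X) h
      simp only [Matrix.mul_add, Matrix.add_mul, Matrix.mul_assoc, hXS', hSX, hXS,
        Matrix.mul_zero, Matrix.zero_mul, zero_add] at this ⊢
      exact this
    have e2 := sandwich_zero hX hW e
    have e3 : X * DS * X * (X + S) = 0 := by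
      rw [Matrix.mul_add, e2, Matrix.mul_assoc, hXS]; simp
    exact (hu.mul_left_eq_zero).1 e3
  have w2 : S * DX * S = 0 := by
    have hW : (S * DX * S).IsSymm := by
      unfold Matrix.IsSymm
      simp only [transpose_mul, hsS.eq, hDX.eq, Matrix.mul_assoc]
    have e : S * (S * DX * S) + S * DX * S * S = 0 := by
      have := congrArg (fun M => S * M * S) h
      simp only [Matrix.mul_add, Matrix.add_mul, Matrix.mul_assoc, hSX', hSX, hXS,
        Matrix.mul_zero, Matrix.zero_mul, add_zero] at this ⊢
      rw [add_comm]
      exact this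
    have e2 := sandwich_zero hS hW e
    have e3 : S * DX * S * (X + S) = 0 := by
      rw [Matrix.mul_add, e2, Matrix.mul_assoc, hSX]; simp
    exact (hu.mul_left_eq_zero).1 e3
  have hK : DX * S + X * DS = 0 := by
    have k1 : X * (DX * S + X * DS) = 0 := by
      have := congrArg (fun M => X * M) h
      simp only [Matrix.mul_add, hXS', Matrix.mul_zero, add_zero] at this ⊢
      rw [← Matrix.mul_assoc X DS X, w1, add_zero] at this
      exact this
    have k2 : S * (DX * S + X * DS) = 0 := by
      rw [Matrix.mul_add, hSX', ← Matrix.mul_assoc, w2, add_zero]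
    have k3 : (X + S) * (DX * S + X * DS) = 0 := by
      rw [Matrix.add_mul, k1, k2, add_zero]
    exact (hu.mul_right_eq_zero).1 k3
  set G := (X + S)⁻¹ with hG
  have hGp : G.PosDef := hD.inv
  have hdet : IsUnit (X + S).det := (Matrix.isUnit_iff_isUnit_det _).1 hu
  have g1 : (X + S) * G = 1 := Matrix.mul_nonsing_inv _ hdet
  have hcX : G * X = X * G := by
    have : (X + S) * X = X * (X + S) := by rw [Matrix.add_mul, Matrix.mul_add, hSX, hXS]
    calc G * X = G * (X * ((X + S) * G)) := by rw [g1, Matrix.mul_one]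
      _ = G * (((X + S) * X) * G) := by rw [this]; simp only [Matrix.mul_assoc]
      _ = (G * (X + S)) * (X * G) := by simp only [Matrix.mul_assoc]
      _ = X * G := by rw [Matrix.nonsing_inv_mul _ hdet, Matrix.one_mul]
  have hts : (DX * G * DX * S).trace + (DS * G * DS * X).trace = 0 := by
    have e0 : DX * DS = DX * G * (X * DS) + DX * S * G * DS := by
      calc DX * DS = DX * ((X + S) * G) * DS := by rw [g1, Matrix.mul_one]
        _ = DX * (X * G) * DS + DX * S * G * DS := by
          simp only [Matrix.add_mul, Matrix.mul_add, Matrix.mul_assoc]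
        _ = _ := by rw [← hcX]; simp only [Matrix.mul_assoc]
    have a1 : X * DS = -(DX * S) := eq_neg_of_add_eq_zero_right hK
    have a2 : DX * S = -(X * DS) := eq_neg_of_add_eq_zero_left hK
    have e1 : (DX * G * (X * DS)).trace = -(DX * G * DX * S).trace := by
      rw [a1, Matrix.mul_neg, Matrix.trace_neg]
      simp only [Matrix.mul_assoc]
    have e2 : (DX * S * G * DS).trace = -(DS * G * DS * X).trace := by
      rw [a2, Matrix.neg_mul, Matrix.neg_mul, Matrix.trace_neg]
      rw [Matrix.trace_mul_comm (DS * G * DS) X]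
      simp only [Matrix.mul_assoc]
    rw [e0, Matrix.trace_add, e1, e2] at htr
    linarith
  have p1 : 0 ≤ (DX * G * DX * S).trace := by
    have := psd_conj hGp.posSemidef DX
    rw [hDX.eq] at this
    exact tr_nonneg this hS
  have p2 : 0 ≤ (DS * G * DS * X).trace := by
    have := psd_conj hGp.posSemidef DS
    rw [hDS.eq] at this
    exact tr_nonneg this hX
  have q1 := zero_of_quad hGp hS hDX (by linarith)
  refine ⟨q1, ?_⟩
  rw [q1, zero_add] at hK
  exact hK

lemma psd_shift {X S DX : Matrix (Fin n) (Fin n) ℝ} (hX : X.PosSemidef)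
    (hS : S.PosSemidef) (hXS : X * S = 0) (hD : (X + S).PosDef)
    (hDX : DX.IsSymm) (h : DX * S = 0) : ∃ t : ℝ, 0 < t ∧ (X + t • DX).PosSemidef := by
  have hsX := psd_symm hX
  have hsS := psd_symm hS
  have hSX := mul_comm_zero hsX hsS hXS
  have hu := hD.isUnit
  set G := (X + S)⁻¹ with hG
  have hGp : G.PosDef := hD.inv
  have hsG : G.IsSymm := psd_symm hGp.posSemidef
  have hdet : IsUnit (X + S).det := (Matrix.isUnit_iff_isUnit_det _).1 hu
  have g1 : (X + S) * G = 1 := Matrix.mul_nonsing_inv _ hdet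
  have g2 : G * (X + S) = 1 := Matrix.nonsing_inv_mul _ hdet
  have hcX : G * X = X * G := by
    have : (X + S) * X = X * (X + S) := by rw [Matrix.add_mul, Matrix.mul_add, hSX, hXS]
    calc G * X = G * (X * ((X + S) * G)) := by rw [g1, Matrix.mul_one]
      _ = G * (((X + S) * X) * G) := by rw [this]; simp only [Matrix.mul_assoc]
      _ = (G * (X + S)) * (X * G) := by simp only [Matrix.mul_assoc]
      _ = X * G := by rw [g2, Matrix.one_mul]
  obtain ⟨l, hl, hpd⟩ := pd_perturb hD
  have hn := l1_nonneg DX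
  refine ⟨l / (l1 DX + 1), by positivity, ?_⟩
  set t := l / (l1 DX + 1) with ht
  have ht0 : 0 < t := by positivity
  have hp := hpd (X + S + t • DX) ((hsX.add hsS).add (smul_symm hDX t)) (by
    rw [add_sub_cancel_left]
    have : l1 (t • DX) = t * l1 DX := by
      simp only [l1, Matrix.smul_apply, smul_eq_mul, abs_mul, abs_of_pos ht0, Finset.mul_sum]
    rw [this, ht, div_mul_eq_mul_div, div_lt_iff₀ (by positivity)]
    nlinarith)
  have hq := psd_conj hp.posSemidef (X * G)
  have hSDX : S * DX = 0 := mul_comm_zero hDX hsS h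
  have a1 : DX * (X * G) = DX := by
    have : DX * ((X + S) * G) = DX * (X * G) + DX * S * G := by
      simp only [Matrix.add_mul, Matrix.mul_add, Matrix.mul_assoc]
    rw [g1, Matrix.mul_one, h, Matrix.zero_mul, add_zero] at this
    exact this.symm
  have a2 : (X * G) * DX = DX := by
    have := congrArg transpose a1
    rw [transpose_mul, transpose_mul, hDX.eq, hsX.eq, hsG.eq, hcX] at this
    exact this
  have a3 : (X * G) * (X + S) * (X * G) = X := by
    rw [Matrix.mul_assoc X G (X + S), g2, Matrix.mul_one, ← Matrix.mul_assoc]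
    have : X * ((X + S) * G) = X * X * G + X * S * G := by
      simp only [Matrix.add_mul, Matrix.mul_add, Matrix.mul_assoc]
    rw [g1, Matrix.mul_one, hXS, Matrix.zero_mul, add_zero] at this
    exact this.symm
  have hT : (X * G)ᵀ = X * G := by rw [transpose_mul, hsX.eq, hsG.eq, hcX]
  rw [hT, Matrix.mul_add, Matrix.add_mul, a3, Matrix.mul_smul, Matrix.smul_mul, a2, a1] at hq
  exact hq

lemma J_of_strict (hSA : StandingAssumptions C Cbar A b) {ε : ℝ}
    {X S : Matrix (Fin n) (Fin n) ℝ} {y : Fin m → ℝ}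
    (hP : PrimalOpt C Cbar A b ε = {X}) (hDl : DualOpt C Cbar A b ε = {(y, S)})
    (hpd : (X + S).PosDef) : JNonsingular A X S := by
  have hA := hSA.2.2.1
  have hX : X ∈ PrimalOpt C Cbar A b ε := by rw [hP]; rfl
  have hS : (y, S) ∈ DualOpt C Cbar A b ε := by rw [hDl]; rfl
  have hXS := comp_of_opt hSA hX hS
  obtain ⟨⟨hsX, hfX, hpX⟩, -⟩ := id hX
  obtain ⟨⟨hsS, hfS, hpS⟩, -⟩ := id hS
  simp only at hsS hfS hpS
  have hSX := mul_comm_zero hsX hsS hXS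
  intro DX DS Dy hDX hDS h1 h2 h3
  have hDSe : DS = -∑ i, Dy i • A i := eq_neg_of_add_eq_zero_right h2
  have htr : (DX * DS).trace = 0 := by
    rw [hDSe, Matrix.mul_neg, Matrix.trace_neg, Matrix.trace_mul_comm, tr_Psi]
    simp [h1]
  obtain ⟨z1, z2⟩ := strict_block hpX hpS hXS hpd hDX hDS htr h3
  have z3 := mul_comm_zero hsX hDS z2
  obtain ⟨t, ht, hpt⟩ := psd_shift hpX hpS hXS hpd hDX z1
  obtain ⟨s, hs, hps⟩ := psd_shift hpS hpX hSX (by rwa [add_comm]) hDS z3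
  have o1 : X + t • DX ∈ PrimalOpt C Cbar A b ε := by
    refine (opt_of_comp (y := y) (S := S) ⟨psd_symm hpt, fun i => ?_, hpt⟩ hS.1 ?_).1
    · rw [Matrix.mul_add, Matrix.mul_smul, Matrix.trace_add, Matrix.trace_smul, h1, hfX]; simp
    · rw [Matrix.add_mul, Matrix.smul_mul, hXS, z1]; simp
  have o2 : (y + s • Dy, S + s • DS) ∈ DualOpt C Cbar A b ε := by
    refine (opt_of_comp (X := X) hX.1 ⟨psd_symm hps, ?_, hps⟩ ?_).2
    · have : ∑ i, (y + s • Dy) i • A i = ∑ i, y i • A i + s • ∑ i, Dy i • A i := by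
        simp [add_smul, Finset.sum_add_distrib, Finset.smul_sum, smul_smul]
      rw [this, hDSe, smul_neg, ← hfS]; abel
    · rw [Matrix.mul_add, Matrix.mul_smul, hXS, z2]; simp
  rw [hP, mem_singleton_iff, add_eq_left] at o1
  rw [hDl, mem_singleton_iff, Prod.mk.injEq, add_eq_left, add_eq_left] at o2
  exact ⟨(smul_eq_zero.1 o1).resolve_left ht.ne', (smul_eq_zero.1 o2.1).resolve_left hs.ne',
    (smul_eq_zero.1 o2.2).resolve_left hs.ne'⟩

end JStrict

section Openness

variable {n m : ℕ} {C Cbar : Matrix (Fin n) (Fin n) ℝ}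
  {A : Fin m → Matrix (Fin n) (Fin n) ℝ} {b : Fin m → ℝ}

lemma l1_smul (t : ℝ) (M : Matrix (Fin n) (Fin n) ℝ) : l1 (t • M) = |t| * l1 M := by
  simp only [l1, Matrix.smul_apply, smul_eq_mul, abs_mul, Finset.mul_sum]

lemma abs_entry_le_l1 (M : Matrix (Fin n) (Fin n) ℝ) (i j : Fin n) : |M i j| ≤ l1 M := by
  unfold l1
  have h1 : |M i j| ≤ ∑ j, |M i j| :=
    Finset.single_le_sum (f := fun j => |M i j|) (fun _ _ => abs_nonneg _) (Finset.mem_univ j)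
  exact h1.trans (Finset.single_le_sum (f := fun i => ∑ j, |M i j|)
    (fun _ _ => Finset.sum_nonneg fun _ _ => abs_nonneg _) (Finset.mem_univ i))

lemma zero_of_l1 {M : Matrix (Fin n) (Fin n) ℝ} (h : l1 M = 0) : M = 0 := by
  ext i j
  have := abs_entry_le_l1 M i j
  rw [h] at this
  exact abs_nonpos_iff.1 this

/-- uniform bounds on optimal solutions near an interior parameter -/
lemma opt_bounds (hSA : StandingAssumptions C Cbar A b) {ε₀ : ℝ}
    (h : ε₀ ∈ interior (Eset C Cbar A b)) :
    ∃ r R : ℝ, 0 < r ∧ ∀ ε, |ε - ε₀| < r → ∀ X y S, X ∈ PrimalOpt C Cbar A b ε →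
      (y, S) ∈ DualOpt C Cbar A b ε → X.trace ≤ R ∧ S.trace ≤ R := by
  obtain ⟨X0, -, -, hX0, hX0p, -⟩ := hSA.2.2.2.2
  obtain ⟨l, c, r, hl, hr, hco⟩ := coercive hSA h
  obtain ⟨l', hl', hlow⟩ := pd_lower hX0p
  set M := |(C * X0).trace| + (|ε₀| + r) * |(Cbar * X0).trace| with hM
  refine ⟨r, max ((M - c) / l) ((M - c) / l'), hr, fun ε hε X y S hX hS => ?_⟩
  have hb : ((C + ε • Cbar) * X0).trace ≤ M := by
    rw [Matrix.add_mul, Matrix.smul_mul, Matrix.trace_add, Matrix.trace_smul, smul_eq_mul]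
    have h1 := le_abs_self (C * X0).trace
    have h2 : ε * (Cbar * X0).trace ≤ (|ε₀| + r) * |(Cbar * X0).trace| := by
      refine (le_abs_self _).trans ?_
      rw [abs_mul]
      refine mul_le_mul_of_nonneg_right ?_ (abs_nonneg _)
      have := abs_sub_abs_le_abs_sub ε ε₀
      linarith
    linarith
  have h1 := hco ε hε X hX.1
  have h2 := hX.2 X0 hX0
  have h3 := comp_of_opt hSA hX hS
  have h4 := gap_eq hX.1 hS.1
  have h5 := gap_eq hX0 hS.1
  simp only [h3, Matrix.trace_zero] at h4 h5
  have h6 := hlow S hS.1.2.2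
  have h7 : 0 ≤ X.trace := hX.1.2.2.trace_nonneg
  have h8 : 0 ≤ l * X.trace := by positivity
  constructor
  · refine le_max_of_le_left ?_
    rw [le_div_iff₀ hl]; linarith
  · refine le_max_of_le_right ?_
    rw [le_div_iff₀ hl']; linarith

lemma J_open (hSA : StandingAssumptions C Cbar A b) {ε₀ : ℝ}
    (h : ε₀ ∈ interior (Eset C Cbar A b))
    (hJ : ∀ X y S, X ∈ PrimalOpt C Cbar A b ε₀ → (y, S) ∈ DualOpt C Cbar A b ε₀ →
      JNonsingular A X S) :
    ∃ δ : ℝ, 0 < δ ∧ ∀ ε, |ε - ε₀| < δ → ∀ X y S, X ∈ PrimalOpt C Cbar A b ε →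
      (y, S) ∈ DualOpt C Cbar A b ε → JNonsingular A X S := by
  obtain ⟨hC, hCb, hA, hLI, -⟩ := id hSA
  obtain ⟨r, R, hr, hbd⟩ := opt_bounds hSA h
  have hker : LinearMap.ker (PsiA A) = ⊥ := by
    rw [LinearMap.ker_eq_bot']
    exact fun y hy => Psi_inj hLI hy
  obtain ⟨L, hL⟩ := LinearMap.exists_leftInverse_of_injective (PsiA A) hker
  have hLc : Continuous L := L.continuous_of_finiteDimensional
  have hPc : Continuous (PsiA A) := (PsiA A).continuous_of_finiteDimensional
  have hFc : Continuous (PhiA A) := (PhiA A).continuous_of_finiteDimensional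
  let Box : ℝ → Set (Matrix (Fin n) (Fin n) ℝ) := fun R => {X | ∀ i j, |X i j| ≤ R}
  let K : Set (ℝ × Matrix (Fin n) (Fin n) ℝ × Matrix (Fin n) (Fin n) ℝ ×
      Matrix (Fin n) (Fin n) ℝ × (Fin m → ℝ)) :=
    Icc (ε₀ - r / 2) (ε₀ + r / 2) ×ˢ Box R ×ˢ Box R ×ˢ Box 1 ×ˢ
      (Set.univ.pi fun _ => Icc (-1) 1)
  have hK : IsCompact K := isCompact_Icc.prod ((box_compact R).prod ((box_compact R).prod
    ((box_compact 1).prod (isCompact_univ_pi fun _ => isCompact_Icc))))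
  let Z : Set (ℝ × Matrix (Fin n) (Fin n) ℝ × Matrix (Fin n) (Fin n) ℝ ×
      Matrix (Fin n) (Fin n) ℝ × (Fin m → ℝ)) :=
    {p | PrimalFeasible A b p.2.1} ∩ ({p | p.2.2.1.PosSemidef} ∩
    ({p | PsiA A (L (C + p.1 • Cbar - p.2.2.1)) + p.2.2.1 = C + p.1 • Cbar} ∩
    ({p | p.2.1 * p.2.2.1 = 0} ∩ ({p | p.2.2.2.1ᵀ = p.2.2.2.1} ∩ ({p | PhiA A p.2.2.2.1 = 0} ∩
    ({p | p.2.2.2.1 * p.2.2.1 + p.2.2.1 * p.2.2.2.1 + p.2.1 * (-(PsiA A p.2.2.2.2)) +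
      (-(PsiA A p.2.2.2.2)) * p.2.1 = 0} ∩
    {p | l1 p.2.2.2.1 + ∑ i, |p.2.2.2.2 i| = 1}))))))
  have hZ : IsClosed Z := by
    refine IsClosed.inter (primalFeasible_closed.preimage (by fun_prop)) ?_
    refine IsClosed.inter (psd_isClosed.preimage (by fun_prop)) ?_
    refine IsClosed.inter (isClosed_eq (by fun_prop) (by fun_prop)) ?_
    refine IsClosed.inter (isClosed_eq (by fun_prop) (by fun_prop)) ?_
    refine IsClosed.inter (isClosed_eq (by fun_prop) (by fun_prop)) ?_
    refine IsClosed.inter (isClosed_eq (by fun_prop) (by fun_prop)) ?_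
    refine IsClosed.inter (isClosed_eq (by fun_prop) (by fun_prop)) ?_
    have := l1_cont (n := n)
    exact isClosed_eq (by fun_prop) (by fun_prop)
  have hcl : IsClosed (Prod.fst '' (K ∩ Z)) := ((hK.inter_right hZ).image continuous_fst).isClosed
  have hnot : ε₀ ∉ Prod.fst '' (K ∩ Z) := by
    rintro ⟨⟨e, X, S, DX, Dy⟩, ⟨-, z1, z2, z3, z4, z5, z6, z7, z8⟩, rfl⟩
    simp only [Set.mem_ofPred_eq] at z1 z2 z3 z4 z5 z6 z7 z8
    obtain ⟨o1, o2⟩ := opt_of_comp z1 (y := L (C + e • Cbar - S)) ⟨psd_symm z2, z3, z2⟩ z4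
    obtain ⟨d1, d2, -⟩ := hJ _ _ _ o1 o2 DX (-(PsiA A Dy)) Dy z5 (Psi_symm hA Dy).neg
      (fun i => congrFun z6 i) (add_neg_cancel _) z7
    subst d1 d2
    simp [l1] at z8
  obtain ⟨d, hd, hball⟩ := Metric.isOpen_iff.1 hcl.isOpen_compl ε₀ hnot
  refine ⟨min d (r / 2), by positivity, fun ε hε X y S hX hS => ?_⟩
  intro DX DS Dy hDX hDS h1 h2 h3
  have hDSe : DS = -(PsiA A Dy) := eq_neg_of_add_eq_zero_right h2
  by_contra hcon
  have hN : 0 < l1 DX + ∑ i, |Dy i| := by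
    have n1 := l1_nonneg DX
    have n2 : 0 ≤ ∑ i, |Dy i| := Finset.sum_nonneg fun _ _ => abs_nonneg _
    refine lt_of_le_of_ne (by positivity) fun h0 => hcon ?_
    have e1 : DX = 0 := zero_of_l1 (by linarith)
    have e2 : ∑ i, |Dy i| = 0 := by linarith
    have e3 : Dy = 0 := by
      funext i
      exact abs_eq_zero.1 ((Finset.sum_eq_zero_iff_of_nonneg fun _ _ => abs_nonneg _).1 e2 i
        (Finset.mem_univ i))
    refine ⟨e1, e3, ?_⟩
    rw [hDSe, e3]; simp
  set N := l1 DX + ∑ i, |Dy i| with hNdef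
  have hε1 := lt_of_lt_of_le hε (min_le_left _ _)
  have hε2 := lt_of_lt_of_le hε (min_le_right _ _)
  have hε3 := abs_lt.1 hε2
  obtain ⟨b1, b2⟩ := hbd ε (by linarith) X y S hX hS
  have hone : l1 (N⁻¹ • DX) + ∑ i, |(N⁻¹ • Dy) i| = 1 := by
    rw [l1_smul]
    simp only [Pi.smul_apply, smul_eq_mul, abs_mul, ← Finset.mul_sum]
    rw [← mul_add, ← hNdef, abs_of_pos (inv_pos.2 hN), inv_mul_cancel₀ hN.ne']
  have s1 : ∀ i, 0 ≤ |(N⁻¹ • Dy) i| := fun i => abs_nonneg _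
  have s2 : 0 ≤ ∑ i, |(N⁻¹ • Dy) i| := Finset.sum_nonneg fun i _ => s1 i
  have s3 := l1_nonneg (N⁻¹ • DX)
  apply hball (show ε ∈ Metric.ball ε₀ d by rwa [Metric.mem_ball, Real.dist_eq])
  refine ⟨(ε, X, S, N⁻¹ • DX, N⁻¹ • Dy), ⟨⟨⟨by linarith, by linarith⟩, ?_, ?_, ?_, ?_⟩,
    hX.1, hS.1.2.2, ?_, comp_of_opt hSA hX hS, ?_, ?_, ?_, hone⟩, rfl⟩
  · exact fun i j => (entry_le hX.1.2.2 i j).trans b1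
  · exact fun i j => (entry_le hS.1.2.2 i j).trans b2
  · exact fun i j => (abs_entry_le_l1 _ i j).trans (by linarith)
  · intro i _
    have := Finset.single_le_sum (f := fun i => |(N⁻¹ • Dy) i|) (fun i _ => s1 i)
      (Finset.mem_univ i)
    exact abs_le.1 (this.trans (by linarith))
  · have e : C + ε • Cbar - S = PsiA A y := by rw [← hS.1.2.1]; exact add_sub_cancel_right _ _
    change PsiA A (L (C + ε • Cbar - S)) + S = C + ε • Cbar
    have e2 : L (PsiA A y) = y := by rw [← LinearMap.comp_apply, hL, LinearMap.id_apply]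
    rw [e, e2]
    exact hS.1.2.1
  · exact smul_symm hDX _
  · have : PhiA A DX = 0 := funext h1
    change PhiA A (N⁻¹ • DX) = 0
    rw [map_smul, this, smul_zero]
  · change N⁻¹ • DX * S + S * (N⁻¹ • DX) + X * (-(PsiA A (N⁻¹ • Dy))) +
      (-(PsiA A (N⁻¹ • Dy))) * X = 0
    rw [map_smul, ← smul_neg, ← hDSe]
    simp only [Matrix.smul_mul, Matrix.mul_smul, ← smul_add]
    rw [h3, smul_zero]

lemma part_two (hSA : StandingAssumptions C Cbar A b)
    {I : Set ℝ} (hIsub : I ⊆ interior (Eset C Cbar A b)) (hIopen : IsOpen I)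
    (hIconn : I.OrdConnected)
    (hreg : ∀ ε ∈ I, ∃ (X S : Matrix (Fin n) (Fin n) ℝ) (y : Fin m → ℝ),
      MaxComp C Cbar A b ε X y S ∧ JNonsingular A X S)
    (hmax : ∀ I' : Set ℝ, I ⊆ I' → I' ⊆ interior (Eset C Cbar A b) → IsOpen I' →
      I'.OrdConnected →
      (∀ ε ∈ I', ∃ (X S : Matrix (Fin n) (Fin n) ℝ) (y : Fin m → ℝ),
        MaxComp C Cbar A b ε X y S ∧ JNonsingular A X S) → I' = I)
    {εbar : ℝ} (hεbar : εbar ∈ interior (Eset C Cbar A b)) (hfr : εbar ∈ frontier I)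
    {X : Matrix (Fin n) (Fin n) ℝ} {p : (Fin m → ℝ) × Matrix (Fin n) (Fin n) ℝ}
    (hP : PrimalOpt C Cbar A b εbar = {X}) (hDl : DualOpt C Cbar A b εbar = {p}) :
    ¬ HasStrictComp C Cbar A b εbar := by
  rintro ⟨X1, y1, S1, hX1, hS1, hpd⟩
  have hJ : ∀ X y S, X ∈ PrimalOpt C Cbar A b εbar → (y, S) ∈ DualOpt C Cbar A b εbar →
      JNonsingular A X S := by
    intro X' y' S' h1 h2
    rw [hP, mem_singleton_iff] at h1 hX1
    rw [hDl, mem_singleton_iff] at h2 hS1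
    have h3 := h2.trans hS1.symm
    rw [Prod.mk.injEq] at h3
    rw [h1, ← hX1, h3.2]
    rw [← hX1] at hP
    rw [← hS1] at hDl
    exact J_of_strict hSA hP hDl hpd
  obtain ⟨δ, hδ, hop⟩ := J_open hSA hεbar hJ
  obtain ⟨δ', hδ', hballE⟩ := Metric.isOpen_iff.1 isOpen_interior εbar hεbar
  set η := min δ δ' with hη
  have hη0 : 0 < η := by positivity
  obtain ⟨e, heI, he⟩ := Metric.mem_closure_iff.1 hfr.1 η hη0
  have heB : e ∈ Metric.ball εbar η := by rwa [Metric.mem_ball, dist_comm]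
  have hI' := hmax (I ∪ Metric.ball εbar η) subset_union_left
    (union_subset hIsub ((Metric.ball_subset_ball (min_le_right _ _)).trans hballE))
    (hIopen.union Metric.isOpen_ball)
    ((hIconn.isPreconnected.union e heI heB (convex_ball εbar η).isPreconnected).ordConnected)
    (by
      rintro ε (hε | hε)
      · exact hreg ε hε
      · obtain ⟨X, y, S, hm⟩ := maxComp_exists hSA
          (hballE (Metric.ball_subset_ball (min_le_right _ _) hε))
        obtain ⟨o1, o2⟩ := maxComp_opt hm
        refine ⟨X, S, y, hm, hop ε ?_ X y S o1 o2⟩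
        rw [Metric.mem_ball, Real.dist_eq] at hε
        exact lt_of_lt_of_le hε (min_le_left _ _))
  have hmem : εbar ∈ I := by
    rw [← hI']; exact Or.inr (Metric.mem_ball_self hη0)
  rw [hIopen.frontier_eq] at hfr
  exact hfr.2 hmem

end Openness

/-- a boundary point of a maximal interval of nonsingularity of the Jacobian at
maximally complementary solutions is a transition point when strict complementarity fails
there; in particular this holds when both optimal sets are singletons. -/
theorem stmt7 {n m : ℕ} (C Cbar : Matrix (Fin n) (Fin n) ℝ)
    (A : Fin m → Matrix (Fin n) (Fin n) ℝ) (b : Fin m → ℝ)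
    (hSA : StandingAssumptions C Cbar A b)
    (I : Set ℝ) (hIsub : I ⊆ interior (Eset C Cbar A b)) (hIopen : IsOpen I)
    (hIconn : I.OrdConnected)
    (hreg : ∀ ε ∈ I, ∃ (X S : Matrix (Fin n) (Fin n) ℝ) (y : Fin m → ℝ),
      MaxComp C Cbar A b ε X y S ∧ JNonsingular A X S)
    (hmax : ∀ I' : Set ℝ, I ⊆ I' → I' ⊆ interior (Eset C Cbar A b) → IsOpen I' →
      I'.OrdConnected →
      (∀ ε ∈ I', ∃ (X S : Matrix (Fin n) (Fin n) ℝ) (y : Fin m → ℝ),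
        MaxComp C Cbar A b ε X y S ∧ JNonsingular A X S) → I' = I)
    (εbar : ℝ) (hεbar : εbar ∈ interior (Eset C Cbar A b)) (hfr : εbar ∈ frontier I) :
    (¬ HasStrictComp C Cbar A b εbar → IsTransitionPoint C Cbar A b εbar) ∧
      (((∃ X, PrimalOpt C Cbar A b εbar = {X}) ∧ (∃ p, DualOpt C Cbar A b εbar = {p})) →
        IsTransitionPoint C Cbar A b εbar) := by
  refine ⟨part_one hSA hIsub hreg hεbar hfr.1, ?_⟩
  rintro ⟨⟨X, hX⟩, ⟨p, hp⟩⟩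
  exact part_one hSA hIsub hreg hεbar hfr.1
    (part_two hSA hIsub hIopen hIconn hreg hmax hεbar hfr hX hp)
end

section
/- Let ε̄ ∈ int(E) be a transition point of the optimal partition, and let (X*, y*, S*) be a maximally complementary solution at ε̄. Then at least one of the following conditions fails: (i) (X*, y*, S*) is strictly complementary; (ii) X* is primal nondegenerate; (iii) (y*, S*) is dual nondegenerate. Equivalently, the Jacobian J(X*, y*, S*) is singular. -/
open Matrix Set

lemma aux_factor {n : ℕ} {X : Matrix (Fin n) (Fin n) ℝ} (hX : X.PosSemidef) :
    ∃ B : Matrix (Fin n) (Fin n) ℝ, X = Bᵀ * B := by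
  open scoped MatrixOrder in
  obtain ⟨B, hB⟩ := CStarAlgebra.nonneg_iff_eq_star_mul_self.mp (Matrix.nonneg_iff_posSemidef.mpr hX)
  exact ⟨B, by simpa [Matrix.star_eq_conjTranspose] using hB⟩

lemma aux_tr_zero {p q : Type*} [Fintype p] [Fintype q] {B : Matrix p q ℝ}
    (h : (Bᵀ * B).trace = 0) : B = 0 := by
  have := (Matrix.trace_conjTranspose_mul_self_eq_zero_iff (A := B)).1 (by simpa using h)
  exact this

lemma aux_psd_mul {n : ℕ} {X S : Matrix (Fin n) (Fin n) ℝ} (hX : X.PosSemidef)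
    (hS : S.PosSemidef) : 0 ≤ (X * S).trace ∧ ((X * S).trace = 0 → X * S = 0) := by
  obtain ⟨B, rfl⟩ := aux_factor hX
  obtain ⟨D, rfl⟩ := aux_factor hS
  have e : (Bᵀ * B * (Dᵀ * D)).trace = ((B * Dᵀ)ᵀ * (B * Dᵀ)).trace := by
    rw [← Matrix.mul_assoc, Matrix.trace_mul_comm]
    simp [Matrix.transpose_mul, Matrix.mul_assoc]
  refine ⟨?_, fun h => ?_⟩
  · rw [e]
    have := (Matrix.posSemidef_conjTranspose_mul_self (B * Dᵀ)).trace_nonneg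
    simpa using this
  · rw [e] at h
    have := aux_tr_zero h
    calc Bᵀ * B * (Dᵀ * D) = Bᵀ * (B * Dᵀ) * D := by simp [Matrix.mul_assoc]
      _ = 0 := by rw [this]; simp

lemma aux_sq {n : ℕ} {p : Type*} [Fintype p] {X : Matrix (Fin n) (Fin n) ℝ} (hX : X.IsSymm)
    {Y : Matrix (Fin n) p ℝ} (h : X * (X * Y) = 0) : X * Y = 0 := by
  apply aux_tr_zero
  rw [Matrix.transpose_mul, hX.eq, Matrix.mul_assoc, h]; simp

lemma aux_psd_conj {n : ℕ} {X Y : Matrix (Fin n) (Fin n) ℝ} (hX : X.PosSemidef)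
    (h : (Yᵀ * X * Y).trace = 0) : X * Y = 0 := by
  obtain ⟨B, rfl⟩ := aux_factor hX
  have : B * Y = 0 := by
    apply aux_tr_zero
    rw [← h, Matrix.transpose_mul]; simp [Matrix.mul_assoc]
  rw [Matrix.mul_assoc, this]; simp

lemma aux_lyap {n : ℕ} {X D : Matrix (Fin n) (Fin n) ℝ} (hX : X.PosSemidef)
    (hXs : X.IsSymm) (hD : D.IsSymm) (h : X * (X * D + D * X) * X = 0) : X * D * X = 0 := by
  set G := X * D * X with hG
  have hGs : Gᵀ = G := by simp [hG, Matrix.transpose_mul, hXs.eq, hD.eq, Matrix.mul_assoc]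
  have h1 : X * G + G * X = 0 := by
    rw [← h, hG]; noncomm_ring
  have h2 : (Gᵀ * X * G).trace = 0 := by
    have a : (G * (X * G + G * X)).trace = 0 := by rw [h1]; simp
    rw [Matrix.mul_add, Matrix.trace_add] at a
    have b : (G * (G * X)).trace = (G * (X * G)).trace := by
      rw [Matrix.trace_mul_comm, Matrix.mul_assoc]
    rw [hGs, Matrix.mul_assoc]; linarith
  have h3 : X * G = 0 := aux_psd_conj hX h2
  have h4 : X * (X * (D * X)) = 0 := by rw [← h3, hG]; noncomm_ring
  rw [hG, Matrix.mul_assoc]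
  exact aux_sq hXs h4

/-- Core of the nonsingularity argument. -/
lemma aux_core {n : ℕ} {X S DX DS : Matrix (Fin n) (Fin n) ℝ} (hX : X.PosSemidef)
    (hS : S.PosSemidef) (hXs : X.IsSymm) (hSs : S.IsSymm) (hDX : DX.IsSymm) (hDS : DS.IsSymm)
    (hXS : X * S = 0) (hpd : (X + S).PosDef)
    (heq : DX * S + S * DX + X * DS + DS * X = 0) (htr : (DX * DS).trace = 0) :
    X * DS = 0 ∧ S * DX = 0 := by
  have hSX : S * X = 0 := by
    have := congrArg Matrix.transpose hXS
    simpa [Matrix.transpose_mul, hXs.eq, hSs.eq] using this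
  have e1 : X * DS * X = 0 := by
    apply aux_lyap hX hXs hDS
    have : X * (DX * S + S * DX + X * DS + DS * X) * X = 0 := by rw [heq]; simp
    calc X * (X * DS + DS * X) * X = X * (DX * S + S * DX + X * DS + DS * X) * X
          - X * DX * (S * X) - (X * S) * DX * X := by noncomm_ring
      _ = 0 := by rw [this, hSX, hXS]; simp
  have e2 : S * DX * S = 0 := by
    apply aux_lyap hS hSs hDX
    have : S * (DX * S + S * DX + X * DS + DS * X) * S = 0 := by rw [heq]; simp
    calc S * (S * DX + DX * S) * S = S * (DX * S + S * DX + X * DS + DS * X) * S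
          - S * DS * (X * S) - (S * X) * DS * S := by noncomm_ring
      _ = 0 := by rw [this, hSX, hXS]; simp
  set R := (X + S)⁻¹ with hR
  have hRpd : R.PosDef := hpd.inv
  have hdet : IsUnit (X + S).det := (Matrix.isUnit_iff_isUnit_det _).1 hpd.isUnit
  have r1 : (X + S) * R = 1 := Matrix.mul_nonsing_inv _ hdet
  have r2 : R * (X + S) = 1 := Matrix.nonsing_inv_mul _ hdet
  have rX : R * X = X * R := by
    have : (X + S) * X = X * (X + S) := by
      rw [Matrix.add_mul, Matrix.mul_add, hSX, hXS]
    calc R * X = R * X * ((X + S) * R) := by rw [r1, Matrix.mul_one]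
      _ = R * (X * (X + S)) * R := by noncomm_ring
      _ = (R * (X + S)) * X * R := by rw [← this]; noncomm_ring
      _ = X * R := by rw [r2, Matrix.one_mul]
  have rS : R * S = S * R := by
    have : (X + S) * S = S * (X + S) := by
      rw [Matrix.add_mul, Matrix.mul_add, hSX, hXS]
    calc R * S = R * S * ((X + S) * R) := by rw [r1, Matrix.mul_one]
      _ = R * (S * (X + S)) * R := by noncomm_ring
      _ = (R * (X + S)) * S * R := by rw [← this]; noncomm_ring
      _ = S * R := by rw [r2, Matrix.one_mul]
  have hRs : Rᵀ = R := by simpa using hRpd.isHermitian.eq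
  -- projections
  obtain ⟨P, hP⟩ : ∃ P, P = X * R := ⟨_, rfl⟩
  obtain ⟨Q, hQ⟩ : ∃ Q, Q = S * R := ⟨_, rfl⟩
  have hPQ : P + Q = 1 := by rw [hP, hQ, ← Matrix.add_mul, r1]
  have hPt : Pᵀ = P := by rw [hP, Matrix.transpose_mul, hRs, hXs.eq, rX]
  have hQt : Qᵀ = Q := by rw [hQ, Matrix.transpose_mul, hRs, hSs.eq, rS]
  have hXQ : X * Q = 0 := by rw [hQ, ← Matrix.mul_assoc, hXS, Matrix.zero_mul]
  have hSP : S * P = 0 := by rw [hP, ← Matrix.mul_assoc, hSX, Matrix.zero_mul]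
  have hQX : Q * X = 0 := by rw [hQ, ← rS, Matrix.mul_assoc, hSX, Matrix.mul_zero]
  have hPS : P * S = 0 := by rw [hP, ← rX, Matrix.mul_assoc, hXS, Matrix.mul_zero]
  have hXP : X * P = X := by
    have : X * (P + Q) = X := by rw [hPQ, Matrix.mul_one]
    rwa [Matrix.mul_add, hXQ, add_zero] at this
  have hPX : P * X = X := by
    have : (P + Q) * X = X := by rw [hPQ, Matrix.one_mul]
    rwa [Matrix.add_mul, hQX, add_zero] at this
  have hSQ : S * Q = S := by
    have : S * (P + Q) = S := by rw [hPQ, Matrix.mul_one]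
    rwa [Matrix.mul_add, hSP, zero_add] at this
  have hQS : Q * S = S := by
    have : (P + Q) * S = S := by rw [hPQ, Matrix.one_mul]
    rwa [Matrix.add_mul, hPS, zero_add] at this
  have f1 : P * DS * P = 0 := by
    calc P * DS * P = R * (X * DS * X) * R := by
          rw [hP]; nth_rewrite 1 [← rX]; noncomm_ring
      _ = 0 := by rw [e1]; simp
  have f2 : Q * DX * Q = 0 := by
    calc Q * DX * Q = R * (S * DX * S) * R := by
          rw [hQ]; nth_rewrite 1 [← rS]; noncomm_ring
      _ = 0 := by rw [e2]; simp
  set a := P * DX * Q with ha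
  set d := P * DS * Q with hd
  have g1 : a * S + X * d = 0 := by
    have : P * (DX * S + S * DX + X * DS + DS * X) * Q = 0 := by rw [heq]; simp
    calc a * S + X * d = P * DX * (Q * S) + (X * P) * DS * Q := by rw [ha, hd]; noncomm_ring
      _ = P * DX * (S * Q) + (P * X) * DS * Q := by rw [hQS, hXP, hSQ, hPX]
      _ = P * (DX * S + S * DX + X * DS + DS * X) * Q - (P * S) * DX * Q
          - P * DS * (X * Q) := by noncomm_ring
      _ = 0 := by rw [this, hPS, hXQ]; simp
  have haR : a = -(X * d * R) := by
    have : a * S = -(X * d) := eq_neg_of_add_eq_zero_left g1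
    have h1 : a * S * R = a := by
      have hQQ : Q * Q = Q := by
        rw [hQ, ← Matrix.mul_assoc, ← hQ, hQS, ← hQ]
      rw [Matrix.mul_assoc, ← hQ, ha, Matrix.mul_assoc, hQQ]
    rw [← h1, this, Matrix.neg_mul]
  have htr2 : (a * dᵀ).trace = 0 := by
    have hdt : dᵀ = Q * DS * P := by
      rw [hd, Matrix.transpose_mul, Matrix.transpose_mul, hPt, hQt, hDS.eq, Matrix.mul_assoc]
    have hQQ : Q * Q = Q := by rw [hQ, ← Matrix.mul_assoc, ← hQ, hQS, ← hQ]
    have hPP : P * P = P := by rw [hP, ← Matrix.mul_assoc, ← hP, hPX, ← hP]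
    have t1 : (DX * DS).trace = (P * DX * P * DS).trace + (P * DX * Q * DS).trace
        + (Q * DX * P * DS).trace + (Q * DX * Q * DS).trace := by
      rw [← Matrix.trace_add, ← Matrix.trace_add, ← Matrix.trace_add]
      congr 1
      calc DX * DS = (P + Q) * DX * (P + Q) * DS := by rw [hPQ]; simp
        _ = _ := by noncomm_ring
    have t2 : (P * DX * P * DS).trace = 0 := by
      have : (P * DX * P * DS).trace = (DX * (P * DS * P)).trace := by
        rw [show P * DX * P * DS = P * (DX * (P * DS)) by noncomm_ring, Matrix.trace_mul_comm]
        congr 1; noncomm_ring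
      rw [this, f1]; simp
    have t3 : (P * DX * Q * DS).trace = (a * dᵀ).trace := by
      rw [hdt, ha]
      have : P * DX * Q * (Q * DS * P) = P * DX * (Q * Q) * DS * P := by noncomm_ring
      rw [this, hQQ, Matrix.trace_mul_comm (P * DX * Q * DS) P,
        show P * (P * DX * Q * DS) = (P * P) * DX * Q * DS by noncomm_ring, hPP]
    have t4 : (Q * DX * P * DS).trace = (P * DX * Q * DS).trace := by
      rw [← Matrix.trace_transpose]
      simp only [Matrix.transpose_mul, hPt, hQt, hDX.eq, hDS.eq]
      rw [Matrix.trace_mul_comm]; congr 1; noncomm_ring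
    rw [t2, t4, t3, f2] at t1
    simp at t1
    linarith
  have hZ : (X * (d * R * dᵀ)).trace = 0 := by
    rw [haR] at htr2
    have : -(X * d * R) * dᵀ = -(X * (d * R * dᵀ)) := by noncomm_ring
    rw [this, Matrix.trace_neg] at htr2
    linarith
  have hZpsd : (d * R * dᵀ).PosSemidef := by
    have := hRpd.posSemidef.mul_mul_conjTranspose_same d
    simpa using this
  have hXZ : X * (d * R * dᵀ) = 0 := (aux_psd_mul hX hZpsd).2 hZ
  have hRd : R * (X * d)ᵀ = 0 := by
    apply aux_psd_conj hRpd.posSemidef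
    have : ((X * d)ᵀᵀ * R * (X * d)ᵀ) = X * (d * R * dᵀ) * X := by
      rw [Matrix.transpose_transpose, Matrix.transpose_mul, hXs.eq]; noncomm_ring
    rw [this, hXZ]; simp
  have hXd : X * d = 0 := by
    have : (X * d)ᵀ = 0 := by
      calc (X * d)ᵀ = ((X + S) * R) * (X * d)ᵀ := by rw [r1, Matrix.one_mul]
        _ = 0 := by rw [Matrix.mul_assoc, hRd, Matrix.mul_zero]
    simpa using congrArg Matrix.transpose this
  have ha0 : a = 0 := by rw [haR, hXd]; simp
  have hQXP : Q * DX * P = 0 := by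
    have := congrArg Matrix.transpose ha0
    rw [ha, Matrix.transpose_mul, Matrix.transpose_mul, hPt, hQt, hDX.eq] at this
    rw [Matrix.mul_assoc, this]; simp
  constructor
  · calc X * DS = X * DS * (P + Q) := by rw [hPQ, Matrix.mul_one]
      _ = (X * P) * DS * P + (X * P) * DS * Q := by rw [hXP]; noncomm_ring
      _ = X * (P * DS * P) + X * d := by rw [hd]; noncomm_ring
      _ = 0 := by rw [f1, hXd]; simp
  · calc S * DX = S * DX * (P + Q) := by rw [hPQ, Matrix.mul_one]
      _ = (S * Q) * DX * P + (S * Q) * DX * Q := by rw [hSQ]; noncomm_ring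
      _ = S * (Q * DX * P) + S * (Q * DX * Q) := by noncomm_ring
      _ = 0 := by rw [hQXP, f2]; simp

lemma aux_ext {p q : ℕ} {M N : Matrix (Fin p) (Fin q) ℝ} (h : ∀ v, M *ᵥ v = N *ᵥ v) : M = N :=
  Matrix.mulVec_injective (funext h)

lemma aux_nondeg {n m : ℕ} {A : Fin m → Matrix (Fin n) (Fin n) ℝ}
    {X S : Matrix (Fin n) (Fin n) ℝ} (hX : X.PosSemidef)
    (hS : S.PosSemidef) (hXs : X.IsSymm) (hSs : S.IsSymm)
    (hXS : X * S = 0) (hpd : (X + S).PosDef) (hP : PrimalNondeg A X) (hD : DualNondeg A S) :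
    JNonsingular A X S := by
  intro DX DS Dy hDX hDS h1 h2 h3
  have hDSe : DS = -∑ i, Dy i • A i := eq_neg_of_add_eq_zero_right h2
  have htr : (DX * DS).trace = 0 := by
    rw [Matrix.trace_mul_comm, hDSe, Matrix.neg_mul, Finset.sum_mul, Matrix.trace_neg,
      Matrix.trace_sum]
    simp [h1]
  obtain ⟨c1, c2⟩ := aux_core hX hS hXs hSs hDX hDS hXS hpd h3 htr
  have c1' : DS * X = 0 := by
    simpa [Matrix.transpose_mul, hXs.eq, hDS.eq] using congrArg Matrix.transpose c1
  -- primal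
  have hDy : Dy = 0 := by
    obtain ⟨r, M₁, M₂, -, -, -, hr, hli⟩ := hP
    have hM : DS * M₁ = 0 := by
      apply aux_ext
      intro v
      have : M₁ *ᵥ v ∈ LinearMap.range X.mulVecLin := by
        rw [← hr]; exact ⟨v, rfl⟩
      obtain ⟨w, hw⟩ := this
      rw [← Matrix.mulVec_mulVec, ← hw, Matrix.mulVecLin_apply, Matrix.mulVec_mulVec, c1']
      simp
    have hM' : M₁ᵀ * DS = 0 := by
      simpa [Matrix.transpose_mul, hDS.eq] using congrArg Matrix.transpose hM
    have hsum : ∑ i, Dy i • A i = -DS := by rw [hDSe, neg_neg]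
    rw [Fintype.linearIndependent_iff] at hli
    funext i
    refine hli Dy ?_ i
    have key : ∀ (p q : ℕ) (U : Matrix (Fin n) (Fin p) ℝ) (V : Matrix (Fin n) (Fin q) ℝ),
        ∑ i, Dy i • (Uᵀ * A i * V) = -(Uᵀ * DS * V) := by
      intro p q U V
      rw [← Matrix.neg_mul, ← Matrix.mul_neg, ← hsum, Matrix.mul_sum, Matrix.sum_mul]
      simp
    have hb : ∑ i, Dy i • Matrix.fromBlocks (M₁ᵀ * (A i) * M₁) (M₁ᵀ * (A i) * M₂)
        (M₂ᵀ * (A i) * M₁) (0 : Matrix (Fin (n-r)) (Fin (n-r)) ℝ)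
        = Matrix.fromBlocks (∑ i, Dy i • (M₁ᵀ * (A i) * M₁)) (∑ i, Dy i • (M₁ᵀ * (A i) * M₂))
          (∑ i, Dy i • (M₂ᵀ * (A i) * M₁)) 0 := by
      ext a b
      rcases a with a | a <;> rcases b with b | b <;> simp [Matrix.sum_apply]
    rw [hb, key, key, key, hM', Matrix.mul_assoc M₂ᵀ, hM]
    simp
  have hDS0 : DS = 0 := by rw [hDSe, hDy]; simp
  refine ⟨?_, hDy, hDS0⟩
  obtain ⟨k, N₁, hN, hr, hsp⟩ := hD
  have hNN : N₁ * (N₁ᵀ * DX) = DX := by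
    apply aux_ext
    intro v
    have : DX *ᵥ v ∈ LinearMap.range N₁.mulVecLin := by
      rw [hr, LinearMap.mem_ker, Matrix.mulVecLin_apply, Matrix.mulVec_mulVec, c2]; simp
    obtain ⟨w, hw⟩ := this
    rw [← Matrix.mulVec_mulVec, ← Matrix.mulVec_mulVec, ← hw, Matrix.mulVecLin_apply,
      Matrix.mulVec_mulVec w, hN, Matrix.one_mulVec]
  have hNN' : DX * N₁ * N₁ᵀ = DX := by
    simpa [Matrix.transpose_mul, hDX.eq, Matrix.mul_assoc] using congrArg Matrix.transpose hNN
  set W := N₁ᵀ * DX * N₁ with hW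
  have hWs : W.IsSymm := by
    simp [Matrix.IsSymm, hW, Matrix.transpose_mul, hDX.eq, Matrix.mul_assoc]
  have hall : ∀ Z ∈ Submodule.span ℝ (Set.range fun i => N₁ᵀ * (A i) * N₁), (Z * W).trace = 0 := by
    intro Z hZ
    induction hZ using Submodule.span_induction with
    | mem x hx =>
      obtain ⟨i, rfl⟩ := hx
      have : N₁ᵀ * (A i) * N₁ * W = N₁ᵀ * (A i * (N₁ * (N₁ᵀ * DX)) * N₁) := by
        simp only [hW, Matrix.mul_assoc]
      simp only [this]
      rw [hNN, Matrix.trace_mul_comm, Matrix.mul_assoc, Matrix.mul_assoc, ← Matrix.mul_assoc DX,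
        hNN', h1]
    | zero => simp
    | add x y _ _ hx hy => rw [Matrix.add_mul, Matrix.trace_add, hx, hy, add_zero]
    | smul c x _ hx => rw [Matrix.smul_mul, Matrix.trace_smul, hx, smul_zero]
  have hW0 : W = 0 := by
    apply aux_tr_zero
    rw [hWs.eq]
    exact hall W (hsp W hWs)
  calc DX = N₁ * (N₁ᵀ * DX) * N₁ * N₁ᵀ := by rw [hNN, hNN']
    _ = N₁ * W * N₁ᵀ := by simp only [hW, Matrix.mul_assoc]
    _ = 0 := by rw [hW0]; simp

lemma aux_open_pd (n : ℕ) :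
    IsOpen {M : Matrix (Fin n) (Fin n) ℝ | ∀ x : Fin n → ℝ, x ≠ 0 → 0 < x ⬝ᵥ M *ᵥ x} := by
  have hc : Continuous fun z : Matrix (Fin n) (Fin n) ℝ × (Fin n → ℝ) => z.2 ⬝ᵥ z.1 *ᵥ z.2 :=
    continuous_snd.dotProduct (continuous_fst.matrix_mulVec continuous_snd)
  rw [isOpen_iff_eventually]
  intro M hM
  have := (isCompact_sphere (0 : Fin n → ℝ) 1).eventually_forall_of_forall_eventually
    (x₀ := M) (P := fun M x => 0 < x ⬝ᵥ M *ᵥ x) (by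
      intro y hy
      have hy0 : y ≠ 0 := by
        rintro rfl
        simp at hy
      exact hc.continuousAt.eventually (lt_mem_nhds (hM y hy0)))
  filter_upwards [this] with M' hM' x hx
  have hn : 0 < ‖x‖ := norm_pos_iff.2 hx
  have h1 := hM' (‖x‖⁻¹ • x) (by
    rw [mem_sphere_zero_iff_norm, norm_smul, norm_inv, norm_norm, inv_mul_cancel₀ hn.ne'])
  rw [Matrix.mulVec_smul, smul_dotProduct, dotProduct_smul, smul_eq_mul, smul_eq_mul] at h1
  have hi : 0 < ‖x‖⁻¹ := inv_pos.2 hn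
  exact pos_of_mul_pos_right (pos_of_mul_pos_right h1 hi.le) hi.le

lemma aux_tr_nondeg {n : ℕ} {B : Matrix (Fin n) (Fin n) ℝ} (h : ∀ M, (B * M).trace = 0) : B = 0 := by
  have : Bᵀ = 0 := by
    apply aux_tr_zero
    rw [Matrix.transpose_transpose]; exact h _
  simpa using congrArg Matrix.transpose this

lemma aux_surj {n m : ℕ} {A : Fin m → Matrix (Fin n) (Fin n) ℝ} (hli : LinearIndependent ℝ A)
    (u : Fin m → ℝ) : ∃ M, ∀ i, (A i * M).trace = u i := by
  let g : Matrix (Fin n) (Fin n) ℝ →ₗ[ℝ] (Fin m → ℝ) :=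
    { toFun := fun M i => (A i * M).trace
      map_add' := by intro x y; funext i; simp [Matrix.mul_add]
      map_smul' := by intro c x; funext i; simp }
  have htop : LinearMap.range g = ⊤ := by
    by_contra hne
    obtain ⟨f, hf0, hf⟩ := Submodule.exists_le_ker_of_lt_top _ (lt_top_iff_ne_top.2 hne)
    have hfe : ∀ u, f u = ∑ i, u i * f (Pi.single i 1) := by
      intro u
      rw [LinearMap.pi_apply_eq_sum_univ f u]
      refine Finset.sum_congr rfl fun i _ => ?_
      have : (fun j => if i = j then (1 : ℝ) else 0) = Pi.single i 1 := by
        funext j; simp [Pi.single_apply, eq_comm]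
      rw [this, smul_eq_mul]
    have hz : ∑ i, f (Pi.single i 1) • A i = 0 := by
      apply aux_tr_nondeg
      intro M
      have h0 : f (g M) = 0 := hf ⟨M, rfl⟩
      rw [hfe] at h0
      rw [Finset.sum_mul, Matrix.trace_sum, ← h0]
      refine Finset.sum_congr rfl fun i _ => ?_
      rw [Matrix.smul_mul, Matrix.trace_smul, smul_eq_mul, mul_comm]
      rfl
    have hc := Fintype.linearIndependent_iff.1 hli _ hz
    apply hf0
    ext u
    simp [hc]
  obtain ⟨M, hM⟩ : u ∈ LinearMap.range g := by rw [htop]; trivial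
  exact ⟨M, fun i => congrFun hM i⟩

lemma aux_tr_sym {n : ℕ} {B M : Matrix (Fin n) (Fin n) ℝ} (hB : B.IsSymm) :
    (B * Mᵀ).trace = (B * M).trace := by
  rw [← Matrix.trace_transpose, Matrix.transpose_mul, Matrix.transpose_transpose, hB.eq,
    Matrix.trace_mul_comm]

lemma aux_psd_iff {n : ℕ} {M : Matrix (Fin n) (Fin n) ℝ} :
    M.PosSemidef ↔ M.IsSymm ∧ ∀ x : Fin n → ℝ, 0 ≤ x ⬝ᵥ M *ᵥ x := by
  rw [Matrix.posSemidef_iff_dotProduct_mulVec]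
  simp [Matrix.IsHermitian, Matrix.IsSymm]

def auxU (n : ℕ) : Set (Matrix (Fin n) (Fin n) ℝ) := {M | ∀ x : Fin n → ℝ, x ≠ 0 → 0 < x ⬝ᵥ M *ᵥ x}

def auxT {n m : ℕ} (A : Fin m → Matrix (Fin n) (Fin n) ℝ) (C : Matrix (Fin n) (Fin n) ℝ) :
    Matrix (Fin n) (Fin n) ℝ × ℝ →ₗ[ℝ] (Fin m → ℝ) × ℝ where
  toFun := fun z => (fun i => (A i * z.1).trace, (C * z.1).trace + z.2)
  map_add' := by
    intro x y
    refine Prod.ext ?_ ?_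
    · funext i; simp [Matrix.mul_add]
    · simp [Matrix.mul_add]; ring
  map_smul' := by
    intro c x
    refine Prod.ext ?_ ?_
    · funext i; simp
    · simp; ring

lemma aux_hT {n m : ℕ} {A : Fin m → Matrix (Fin n) (Fin n) ℝ} (C : Matrix (Fin n) (Fin n) ℝ) (hli : LinearIndependent ℝ A) : Function.Surjective (auxT A C) := by
  rintro ⟨u, t⟩
  obtain ⟨M, hM⟩ := aux_surj hli u
  exact ⟨(M, t - (C * M).trace), Prod.ext (funext hM) (by simp [auxT])⟩

lemma aux_hUc (n : ℕ) : Convex ℝ (auxU n) := by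
  intro M hM N hN a c ha hc hac x hx
  have h1 := hM x hx
  have h2 := hN x hx
  rw [Matrix.add_mulVec, dotProduct_add, Matrix.smul_mulVec, Matrix.smul_mulVec,
    dotProduct_smul, dotProduct_smul, smul_eq_mul, smul_eq_mul]
  rcases ha.eq_or_lt with rfl | ha
  · simp only [zero_add] at hac; subst hac; linarith
  · have := mul_pos ha h1
    have := mul_nonneg hc h2.le
    linarith

lemma aux_hKo {n m : ℕ} {A : Fin m → Matrix (Fin n) (Fin n) ℝ} (C : Matrix (Fin n) (Fin n) ℝ) (hli : LinearIndependent ℝ A) : IsOpen (auxT A C '' (auxU n ×ˢ Set.Ioi (0:ℝ))) :=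
  (auxT A C).isOpenMap_of_finiteDimensional (aux_hT C hli) _ ((aux_open_pd n).prod isOpen_Ioi)

lemma aux_hnot {n m : ℕ} {A : Fin m → Matrix (Fin n) (Fin n) ℝ} {b : Fin m → ℝ}
    {C : Matrix (Fin n) (Fin n) ℝ} {p : ℝ} (hC : C.IsSymm) (hA : ∀ i, (A i).IsSymm)
    (hopt : ∀ X', PrimalFeasible A b X' → p ≤ (C * X').trace) : ((b, p) : (Fin m → ℝ) × ℝ) ∉ auxT A C '' (auxU n ×ˢ Set.Ioi (0:ℝ)) := by
  rintro ⟨⟨M, s⟩, ⟨hM, hs⟩, he⟩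
  have e1 : ∀ i, (A i * M).trace = b i := fun i => congrFun (congrArg Prod.fst he) i
  have e2 : (C * M).trace + s = p := congrArg Prod.snd he
  have hs' : 0 < s := hs
  have hsym : ∀ B : Matrix (Fin n) (Fin n) ℝ, B.IsSymm →
      (B * ((1/2 : ℝ) • (M + Mᵀ))).trace = (B * M).trace := by
    intro B hB
    rw [Matrix.mul_smul, Matrix.trace_smul, Matrix.mul_add, Matrix.trace_add, aux_tr_sym hB,
      smul_eq_mul]
    ring
  have hsy : ((1/2 : ℝ) • (M + Mᵀ)).IsSymm := by
    simp [Matrix.IsSymm, add_comm]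
  have := hopt ((1/2 : ℝ) • (M + Mᵀ)) ⟨hsy, fun i => by rw [hsym _ (hA i), e1],
    aux_psd_iff.2 ⟨hsy, fun x => by
      rw [Matrix.smul_mulVec, dotProduct_smul, Matrix.add_mulVec, dotProduct_add,
        Matrix.mulVec_transpose, dotProduct_comm x (x ᵥ* M), ← Matrix.dotProduct_mulVec,
        smul_eq_mul]
      rcases eq_or_ne x 0 with rfl | hx
      · simp
      · have := hM x hx
        linarith⟩⟩
  rw [hsym _ hC] at this
  linarith

lemma aux_sep {n m : ℕ} {A : Fin m → Matrix (Fin n) (Fin n) ℝ} {b : Fin m → ℝ}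
    {C : Matrix (Fin n) (Fin n) ℝ} {p : ℝ} (hC : C.IsSymm) (hA : ∀ i, (A i).IsSymm)
    (hli : LinearIndependent ℝ A)
    (hopt : ∀ X', PrimalFeasible A b X' → p ≤ (C * X').trace) :
    ∃ (l : Fin m → ℝ) (τ : ℝ), ∀ M ∈ auxU n, ∀ s : ℝ, 0 < s →
      ∑ i, (A i * M).trace * l i + τ * ((C * M).trace + s) < ∑ i, b i * l i + τ * p := by
  have hKc : Convex ℝ (auxT A C '' (auxU n ×ˢ Set.Ioi (0:ℝ))) :=
    by
      have h1 : Convex ℝ (auxU n ×ˢ Set.Ioi (0:ℝ)) := Convex.prod (aux_hUc n) (convex_Ioi 0)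
      exact Convex.linear_image h1 (auxT A C)
  obtain ⟨f, hf⟩ := geometric_hahn_banach_open_point hKc (aux_hKo C hli) (aux_hnot hC hA hopt)
  obtain ⟨l, hl⟩ : ∃ l : Fin m → ℝ, ∀ i, f (Pi.single i 1, 0) = l i := ⟨_, fun _ => rfl⟩
  obtain ⟨τ, hτ⟩ : ∃ τ, f (0, 1) = τ := ⟨_, rfl⟩
  have hfe : ∀ u t, f (u, t) = ∑ i, u i * l i + τ * t := by
    intro u t
    have h1 : ((u, t) : (Fin m → ℝ) × ℝ) = ∑ i, u i • ((Pi.single i 1, 0) : (Fin m → ℝ) × ℝ)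
        + t • (0, 1) := by
      refine Prod.ext ?_ ?_
      · funext j; simp [Prod.fst_sum, Finset.sum_apply, Pi.single_apply]
      · simp [Prod.snd_sum]
    rw [h1, map_add, map_sum, map_smul, hτ, smul_eq_mul, mul_comm t τ]
    congr 1
    exact Finset.sum_congr rfl fun i _ => by rw [map_smul, hl, smul_eq_mul]
  refine ⟨l, τ, ?_⟩
  have key : ∀ M ∈ auxU n, ∀ s : ℝ, 0 < s → ∑ i, (A i * M).trace * l i + τ * ((C * M).trace + s)
      < ∑ i, b i * l i + τ * p := by
    intro M hM s hs
    have h := hf _ ⟨(M, s), ⟨hM, hs⟩, rfl⟩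
    rw [show auxT A C (M, s) = (fun i => (A i * M).trace, (C * M).trace + s) from rfl,
      hfe, hfe] at h
    exact h
  exact key

lemma aux_strong {n m : ℕ} {A : Fin m → Matrix (Fin n) (Fin n) ℝ} {b : Fin m → ℝ}
    {C X0 X : Matrix (Fin n) (Fin n) ℝ} (hC : C.IsSymm) (hA : ∀ i, (A i).IsSymm)
    (hli : LinearIndependent ℝ A)
    (hX0 : PrimalFeasible A b X0) (hpd : X0.PosDef)
    (hopt : ∀ X', PrimalFeasible A b X' → (C * X).trace ≤ (C * X').trace) :
    ∃ y : Fin m → ℝ, (C - ∑ i, y i • A i).PosSemidef ∧ (C * X).trace ≤ ∑ i, b i * y i := by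
  obtain ⟨p, hp⟩ : ∃ p, (C * X).trace = p := ⟨_, rfl⟩
  rw [hp] at hopt ⊢
  obtain ⟨l, τ, key⟩ := aux_sep hC hA hli hopt
  have hX0U : X0 ∈ auxU n := fun x hx => by simpa using hpd.dotProduct_mulVec_pos hx
  have hτneg : τ < 0 := by
    have h1 := key X0 hX0U 1 one_pos
    simp only [hX0.2.1] at h1
    have h2 := hopt X0 hX0
    by_contra hcon
    push Not at hcon
    nlinarith
  obtain ⟨y, hy⟩ : ∃ y : Fin m → ℝ, ∀ i, y i = -(l i / τ) := ⟨_, fun _ => rfl⟩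
  have hly : ∀ i, l i = -τ * y i := by
    intro i; rw [hy]; have := hτneg.ne; field_simp
  obtain ⟨S, hS⟩ : ∃ S, S = C - ∑ i, y i • A i := ⟨_, rfl⟩
  have key2 : ∀ M ∈ auxU n, ∀ s : ℝ, 0 < s → p - ∑ i, b i * y i < (S * M).trace + s := by
    intro M hM s hs
    have h1 := key M hM s hs
    have h2 : (S * M).trace = (C * M).trace - ∑ i, (A i * M).trace * y i := by
      rw [hS, Matrix.sub_mul, Matrix.trace_sub, Finset.sum_mul, Matrix.trace_sum]
      simp [mul_comm]
    have h3 : ∀ u : Fin m → ℝ, ∑ i, u i * l i = -τ * ∑ i, u i * y i := by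
      intro u
      rw [Finset.mul_sum]
      refine Finset.sum_congr rfl fun i _ => ?_
      rw [hly]; ring
    rw [h3, h3] at h1
    rw [h2]
    nlinarith
  have hxx : ∀ x : Fin n → ℝ, x ≠ 0 → 0 < x ⬝ᵥ x := fun x hx => by
    simpa using (dotProduct_star_self_pos_iff (v := x)).2 hx
  refine ⟨y, hS ▸ aux_psd_iff.2 ⟨?_, fun v => ?_⟩, ?_⟩
  · have : (∑ i, y i • A i)ᵀ = ∑ i, y i • A i := by
      rw [Matrix.transpose_sum]
      exact Finset.sum_congr rfl fun i _ => by rw [Matrix.transpose_smul, (hA i).eq]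
    rw [Matrix.IsSymm, hS, Matrix.transpose_sub, this, hC.eq]
  · by_contra hcon
    push Not at hcon
    set q := v ⬝ᵥ S *ᵥ v with hq
    set g := p - ∑ i, b i * y i with hg
    set c := (|S.trace + 1 - g| + 1) / (-q) with hc
    have hc0 : 0 < c := by
      apply div_pos
      · positivity
      · linarith
    have hmem : c • Matrix.vecMulVec v v + 1 ∈ auxU n := by
      intro x hx
      have e : x ⬝ᵥ (c • Matrix.vecMulVec v v + 1) *ᵥ x = c * (v ⬝ᵥ x) ^ 2 + x ⬝ᵥ x := by
        rw [Matrix.add_mulVec, Matrix.smul_mulVec, Matrix.one_mulVec, dotProduct_add,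
          dotProduct_smul, Matrix.vecMulVec_mulVec]
        simp only [op_smul_eq_smul, dotProduct_smul, smul_eq_mul, dotProduct_comm x v]
        ring
      rw [e]
      have := hxx x hx
      positivity
    have h1 := key2 _ hmem 1 one_pos
    have e : (S * (c • Matrix.vecMulVec v v + 1)).trace = c * q + S.trace := by
      rw [Matrix.mul_add, Matrix.mul_smul, Matrix.trace_add, Matrix.trace_smul, Matrix.mul_one,
        Matrix.mul_vecMulVec, Matrix.trace_vecMulVec, dotProduct_comm]
      simp [hq]
    rw [e] at h1
    have : c * q = -(|S.trace + 1 - g| + 1) := by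
      have : q ≠ 0 := ne_of_lt hcon
      rw [hc]; field_simp
    have := le_abs_self (S.trace + 1 - g)
    linarith
  · by_contra hcon
    push Not at hcon
    set g := p - ∑ i, b i * y i with hg
    have hg0 : 0 < g := by linarith
    set k := |S.trace| + 1 with hk
    have hk0 : 0 < k := by positivity
    have ht : 0 < g / (2 * k) := by positivity
    have hmem : (g / (2 * k)) • (1 : Matrix (Fin n) (Fin n) ℝ) ∈ auxU n := by
      intro x hx
      rw [Matrix.smul_mulVec, Matrix.one_mulVec, dotProduct_smul, smul_eq_mul]
      exact mul_pos ht (hxx x hx)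
    have h1 := key2 _ hmem _ ht
    rw [Matrix.mul_smul, Matrix.trace_smul, Matrix.mul_one, smul_eq_mul] at h1
    have h2 : g / (2 * k) * S.trace + g / (2 * k) ≤ g / (2 * k) * k := by
      have := le_abs_self S.trace
      rw [hk]; nlinarith
    have h3 : g / (2 * k) * k = g / 2 := by field_simp
    linarith

lemma aux_gap {n m : ℕ} {C Cbar : Matrix (Fin n) (Fin n) ℝ} {A : Fin m → Matrix (Fin n) (Fin n) ℝ}
    {b : Fin m → ℝ} {ε : ℝ} {X S : Matrix (Fin n) (Fin n) ℝ} {y : Fin m → ℝ}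
    (hX : PrimalFeasible A b X) (hS : (∑ i, y i • A i) + S = C + ε • Cbar) :
    (X * S).trace = ((C + ε • Cbar) * X).trace - ∑ i, b i * y i := by
  rw [← hS, Matrix.add_mul, Matrix.trace_add, Finset.sum_mul, Matrix.trace_sum,
    Matrix.trace_mul_comm S X]
  simp [hX.2.1, mul_comm]

lemma aux_opt_zero {n m : ℕ} {C Cbar : Matrix (Fin n) (Fin n) ℝ}
    {A : Fin m → Matrix (Fin n) (Fin n) ℝ}
    {b : Fin m → ℝ} (hSA : StandingAssumptions C Cbar A b) {ε : ℝ}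
    {X S : Matrix (Fin n) (Fin n) ℝ} {y : Fin m → ℝ}
    (hX : X ∈ PrimalOpt C Cbar A b ε) (hS : (y, S) ∈ DualOpt C Cbar A b ε) :
    (X * S).trace = 0 := by
  obtain ⟨hC, hCb, hA, hli, X0, -, -, hX0, hpd, -, -⟩ := hSA
  have hCs : (C + ε • Cbar).IsSymm := by
    rw [Matrix.IsSymm, Matrix.transpose_add, Matrix.transpose_smul, hC.eq, hCb.eq]
  obtain ⟨y', hy', hle⟩ := aux_strong hCs hA hli hX0 hpd hX.2
  have h1 := hS.2 y' _ ⟨(aux_psd_iff.1 hy').1, by abel, hy'⟩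
  have h2 := (aux_psd_mul hX.1.2.2 hS.1.2.2).1
  have h3 := aux_gap hX.1 hS.1.2.1
  simp only at h1 h3
  linarith


lemma aux_sumsym {n m : ℕ} {A : Fin m → Matrix (Fin n) (Fin n) ℝ} (hA : ∀ i, (A i).IsSymm)
    (y : Fin m → ℝ) : (∑ i, y i • A i)ᵀ = ∑ i, y i • A i := by
  rw [Matrix.transpose_sum]
  exact Finset.sum_congr rfl fun i _ => by rw [Matrix.transpose_smul, (hA i).eq]

def auxSym (n : ℕ) : Submodule ℝ (Matrix (Fin n) (Fin n) ℝ) where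
  carrier := {M | Mᵀ = M}
  add_mem' := by
    intro a b ha hb
    simp only [Set.mem_ofPred_eq] at *
    rw [Matrix.transpose_add, ha, hb]
  zero_mem' := by simp
  smul_mem' := by
    intro c a ha
    simp only [Set.mem_ofPred_eq] at *
    rw [Matrix.transpose_smul, ha]

lemma aux_strict {n m : ℕ} {A : Fin m → Matrix (Fin n) (Fin n) ℝ} (hA : ∀ i, (A i).IsSymm)
    {X S : Matrix (Fin n) (Fin n) ℝ} (hX : X.PosSemidef) (hS : S.PosSemidef)
    (hJ : JNonsingular A X S) : (X + S).PosDef := by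
  have hXs := (aux_psd_iff.1 hX).1
  have hSs := (aux_psd_iff.1 hS).1
  let L : (auxSym n × (Fin m → ℝ)) →ₗ[ℝ] ((Fin m → ℝ) × auxSym n) :=
    { toFun := fun z => (fun i => (A i * z.1.1).trace,
        ⟨z.1.1 * S + S * z.1.1 - X * (∑ i, z.2 i • A i) - (∑ i, z.2 i • A i) * X, by
          have h1 : (z.1.1)ᵀ = z.1.1 := z.1.2
          have h2 := aux_sumsym hA z.2
          change (_)ᵀ = _
          simp only [Matrix.transpose_sub, Matrix.transpose_add, Matrix.transpose_mul, h1, h2,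
            hXs.eq, hSs.eq]
          abel⟩)
      map_add' := by
        intro x y
        refine Prod.ext ?_ (Subtype.ext ?_)
        · funext i; simp [Matrix.mul_add]
        · simp only [Prod.fst_add, Prod.snd_add, Submodule.coe_add, Pi.add_apply, add_smul,
            Finset.sum_add_distrib, Matrix.mul_add, Matrix.add_mul]
          abel
      map_smul' := by
        intro c x
        refine Prod.ext ?_ (Subtype.ext ?_)
        · funext i; simp
        · simp only [Prod.smul_fst, Prod.smul_snd, Submodule.coe_smul, Pi.smul_apply, smul_assoc,
            ← Finset.smul_sum, Matrix.mul_smul, Matrix.smul_mul, RingHom.id_apply, smul_sub,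
            smul_add] }
  have hinj : Function.Injective L := by
    rw [← LinearMap.ker_eq_bot, LinearMap.ker_eq_bot']
    rintro ⟨⟨D, hD⟩, y⟩ h0
    have e1 : ∀ i, (A i * D).trace = 0 := fun i => congrFun (congrArg Prod.fst h0) i
    have e2 : D * S + S * D - X * (∑ i, y i • A i) - (∑ i, y i • A i) * X = 0 :=
      congrArg Subtype.val (congrArg Prod.snd h0)
    obtain ⟨h1, h2, -⟩ := hJ D (-∑ i, y i • A i) y hD
      (by rw [Matrix.IsSymm, Matrix.transpose_neg, aux_sumsym hA]) e1 (by abel)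
      (by rw [← e2, Matrix.mul_neg, Matrix.neg_mul]; abel)
    subst h1 h2
    rfl
  have hsurj : Function.Surjective L := by
    refine (LinearMap.injective_iff_surjective_of_finrank_eq_finrank ?_).1 hinj
    rw [Module.finrank_prod, Module.finrank_prod, add_comm]
  refine Matrix.PosDef.of_dotProduct_mulVec_pos (hX.1.add hS.1) ?_
  intro v hv
  have nX := hX.dotProduct_mulVec_nonneg v
  have nS := hS.dotProduct_mulVec_nonneg v
  rw [Matrix.add_mulVec, dotProduct_add]
  by_contra hcon
  push Not at hcon
  have zX : X *ᵥ v = 0 := (hX.dotProduct_mulVec_zero_iff v).1 (by linarith)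
  have zS : S *ᵥ v = 0 := (hS.dotProduct_mulVec_zero_iff v).1 (by linarith)
  have zX' : v ᵥ* X = 0 := by rw [← Matrix.mulVec_transpose, hXs.eq, zX]
  have zS' : v ᵥ* S = 0 := by rw [← Matrix.mulVec_transpose, hSs.eq, zS]
  obtain ⟨⟨⟨D, hD⟩, y⟩, hz⟩ := hsurj (0, ⟨Matrix.vecMulVec v v, by
    change (_)ᵀ = _
    rw [Matrix.transpose_vecMulVec]⟩)
  have e2 : D * S + S * D - X * (∑ i, y i • A i) - (∑ i, y i • A i) * X = Matrix.vecMulVec v v :=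
    congrArg Subtype.val (congrArg Prod.snd hz)
  have e3 := congrArg (fun M => v ⬝ᵥ M *ᵥ v) e2
  simp only [Matrix.sub_mulVec, Matrix.add_mulVec, ← Matrix.mulVec_mulVec, zX, zS,
    Matrix.mulVec_zero, dotProduct_sub, dotProduct_add, dotProduct_zero,
    Matrix.dotProduct_mulVec v X, Matrix.dotProduct_mulVec v S, zX', zS', zero_dotProduct,
    Matrix.vecMulVec_mulVec, op_smul_eq_smul, dotProduct_smul, smul_eq_mul] at e3
  have hp : 0 < v ⬝ᵥ v := by simpa using (dotProduct_star_self_pos_iff (v := v)).2 hv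
  nlinarith

lemma aux_unique {n m : ℕ} {C Cbar : Matrix (Fin n) (Fin n) ℝ}
    {A : Fin m → Matrix (Fin n) (Fin n) ℝ} {b : Fin m → ℝ} {ε : ℝ}
    {X S Z T : Matrix (Fin n) (Fin n) ℝ} {y z : Fin m → ℝ}
    (hJ : JNonsingular A X S)
    (hX : PrimalFeasible A b X) (hS : DualFeasible C Cbar A ε y S) (h0 : (X * S).trace = 0)
    (hZ : PrimalFeasible A b Z) (hT : DualFeasible C Cbar A ε z T) (h1 : (Z * T).trace = 0) :
    Z = X ∧ z = y ∧ T = S := by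
  have g1 := aux_gap hX hS.2.1
  have g2 := aux_gap hX hT.2.1
  have g3 := aux_gap hZ hS.2.1
  have g4 := aux_gap hZ hT.2.1
  have p1 := aux_psd_mul hX.2.2 hT.2.2
  have p2 := aux_psd_mul hZ.2.2 hS.2.2
  have q1 := p1.2 (by linarith [p1.1, p2.1])
  have q2 := p2.2 (by linarith [p1.1, p2.1])
  have q0 := (aux_psd_mul hX.2.2 hS.2.2).2 h0
  have tr : ∀ {P Q : Matrix (Fin n) (Fin n) ℝ}, P.IsSymm → Q.IsSymm → P * Q = 0 → Q * P = 0 := by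
    intro P Q hP hQ h
    have := congrArg Matrix.transpose h
    rwa [Matrix.transpose_mul, hP.eq, hQ.eq, Matrix.transpose_zero] at this
  have q0' := tr hX.1 hS.1 q0
  have q1' := tr hX.1 hT.1 q1
  have q2' := tr hZ.1 hS.1 q2
  have r1 := hJ (Z - X) 0 0 (hZ.1.sub hX.1) (by simp [Matrix.IsSymm])
    (fun i => by rw [Matrix.mul_sub, Matrix.trace_sub, hZ.2.1, hX.2.1, sub_self]) (by simp)
    (by simp [Matrix.sub_mul, Matrix.mul_sub, q0, q0', q2, q2'])
  have r2 := hJ 0 (T - S) (z - y) (by simp [Matrix.IsSymm]) (hT.1.sub hS.1)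
    (fun i => by simp) (by
      simp only [Pi.sub_apply, sub_smul, Finset.sum_sub_distrib]
      have := hT.2.1.trans hS.2.1.symm
      rw [sub_add_sub_comm, this, sub_self])
    (by simp [Matrix.sub_mul, Matrix.mul_sub, q0, q0', q1, q1'])
  exact ⟨sub_eq_zero.1 r1.1, sub_eq_zero.1 r2.2.1, sub_eq_zero.1 r2.2.2⟩


def auxF {n m : ℕ} (C Cbar : Matrix (Fin n) (Fin n) ℝ)
    (A : Fin m → Matrix (Fin n) (Fin n) ℝ) (b : Fin m → ℝ) (Xs : Matrix (Fin n) (Fin n) ℝ)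
    (p : ℝ × ℝ) (q : Matrix (Fin n) (Fin n) ℝ × (Fin m → ℝ)) : Prop :=
  q.1.PosSemidef ∧ (∀ i, (A i * q.1).trace = b i) ∧
    (C + p.1 • Cbar - ∑ i, q.2 i • A i).PosSemidef ∧
    ((C + p.1 • Cbar) * q.1).trace - ∑ i, b i * q.2 i = p.2 * (Cbar * (q.1 - Xs)).trace

lemma aux_psd_closed (n : ℕ) : IsClosed {M : Matrix (Fin n) (Fin n) ℝ | M.PosSemidef} := by
  have : {M : Matrix (Fin n) (Fin n) ℝ | M.PosSemidef} =
      {M | Mᵀ = M} ∩ ⋂ x : Fin n → ℝ, {M | 0 ≤ x ⬝ᵥ M *ᵥ x} := by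
    ext M
    simp [aux_psd_iff, Matrix.IsSymm]
  rw [this]
  refine (isClosed_eq (continuous_id.matrix_transpose) continuous_id).inter
    (isClosed_iInter fun x => isClosed_le continuous_const ?_)
  exact continuous_const.dotProduct (continuous_id.matrix_mulVec continuous_const)

lemma aux_F_closed {n m : ℕ} (C Cbar : Matrix (Fin n) (Fin n) ℝ)
    (A : Fin m → Matrix (Fin n) (Fin n) ℝ) (b : Fin m → ℝ) (Xs : Matrix (Fin n) (Fin n) ℝ) :
    IsClosed {z : (ℝ × ℝ) × (Matrix (Fin n) (Fin n) ℝ × (Fin m → ℝ)) |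
      auxF C Cbar A b Xs z.1 z.2} := by
  have c1 : Continuous fun z : (ℝ × ℝ) × (Matrix (Fin n) (Fin n) ℝ × (Fin m → ℝ)) => z.2.1 := by
    fun_prop
  have c2 : ∀ i, Continuous fun z : (ℝ × ℝ) × (Matrix (Fin n) (Fin n) ℝ × (Fin m → ℝ)) =>
      z.2.2 i := by
    fun_prop
  have c3 : Continuous fun z : (ℝ × ℝ) × (Matrix (Fin n) (Fin n) ℝ × (Fin m → ℝ)) =>
      C + z.1.1 • Cbar := by
    fun_prop
  have c4 : Continuous fun z : (ℝ × ℝ) × (Matrix (Fin n) (Fin n) ℝ × (Fin m → ℝ)) =>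
      C + z.1.1 • Cbar - ∑ i, z.2.2 i • A i := by
    fun_prop
  refine ((aux_psd_closed n).preimage c1).and (IsClosed.and ?_
    (((aux_psd_closed n).preimage c4).and ?_))
  · simp only [Set.ofPred_forall]
    exact isClosed_iInter fun i => isClosed_eq ((continuous_const.matrix_mul c1).matrix_trace)
      continuous_const
  · refine isClosed_eq ?_ ?_
    · exact ((c3.matrix_mul c1).matrix_trace).sub
        (continuous_finsetSum _ fun i _ => continuous_const.mul (c2 i))
    · exact (continuous_fst.snd).mul
        ((continuous_const.matrix_mul (c1.sub continuous_const)).matrix_trace)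

section
attribute [local instance] Matrix.normedAddCommGroup Matrix.normedSpace

lemma aux_stab {n m : ℕ} {C Cbar : Matrix (Fin n) (Fin n) ℝ}
    {A : Fin m → Matrix (Fin n) (Fin n) ℝ} {b : Fin m → ℝ} {εb : ℝ}
    {Xs : Matrix (Fin n) (Fin n) ℝ} {ys : Fin m → ℝ}
    (h0 : auxF C Cbar A b Xs (εb, 0) (Xs, ys))
    (huniq : ∀ q, auxF C Cbar A b Xs (εb, 0) q → q = (Xs, ys))
    {O : Set (Matrix (Fin n) (Fin n) ℝ × (Fin m → ℝ))} (hO : O ∈ nhds (Xs, ys)) :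
    ∀ᶠ ε in nhds εb, ∀ q, auxF C Cbar A b Xs (ε, 0) q → q ∈ O := by
  obtain ⟨δ, hδ, hball⟩ := Metric.mem_nhds_iff.1 hO
  have hev := (isCompact_sphere (Xs, ys) δ).eventually_forall_of_forall_eventually
    (x₀ := ((εb, 0) : ℝ × ℝ)) (P := fun p q => ¬ auxF C Cbar A b Xs p q) (by
      intro q hq
      refine (aux_F_closed C Cbar A b Xs).isOpen_compl.mem_nhds ?_
      intro hF
      have := huniq q hF
      subst this
      rw [mem_sphere_iff_norm, sub_self, norm_zero] at hq
      exact hδ.ne hq)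
  obtain ⟨r, hr, hrb⟩ := Metric.eventually_nhds_iff.1 hev
  filter_upwards [Metric.ball_mem_nhds εb hr] with ε hε q hq
  by_contra hqO
  set c : Matrix (Fin n) (Fin n) ℝ × (Fin m → ℝ) := (Xs, ys) with hc
  have hN : δ ≤ ‖q - c‖ := by
    by_contra hlt
    push Not at hlt
    exact hqO (hball (by rwa [mem_ball_iff_norm]))
  have hN0 : 0 < ‖q - c‖ := hδ.trans_le hN
  obtain ⟨t, ht⟩ : ∃ t, t = δ / ‖q - c‖ := ⟨_, rfl⟩
  have ht0 : 0 < t := by rw [ht]; positivity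
  have ht1 : t ≤ 1 := by rw [ht, div_le_one hN0]; exact hN
  rw [Metric.mem_ball, Real.dist_eq] at hε
  refine hrb (y := (εb + t * (ε - εb), (t - 1) * (ε - εb))) ?_ (c + t • (q - c)) ?_ ?_
  · rw [Prod.dist_eq, max_lt_iff]
    simp only [Real.dist_eq, add_sub_cancel_left, sub_zero, abs_mul]
    have a1 : |t| ≤ 1 := by rw [abs_le]; constructor <;> linarith
    have a2 : |t - 1| ≤ 1 := by rw [abs_le]; constructor <;> linarith
    have := abs_nonneg (ε - εb)
    constructor <;> nlinarith
  · rw [mem_sphere_iff_norm, add_sub_cancel_left, norm_smul, Real.norm_of_nonneg ht0.le, ht,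
      div_mul_cancel₀ _ hN0.ne']
  · obtain ⟨X, y⟩ := q
    obtain ⟨f1, f2, f3, f4⟩ := hq
    obtain ⟨g1, g2, g3, g4⟩ := h0
    simp only [hc] at *
    have h1t : 0 ≤ 1 - t := by linarith
    have e : (Xs, ys) + t • ((X, y) - (Xs, ys)) =
        ((1 - t) • Xs + t • X, (1 - t) • ys + t • y) := by
      refine Prod.ext ?_ ?_
      · simp only [Prod.fst_add, Prod.smul_fst, Prod.fst_sub]; module
      · simp only [Prod.snd_add, Prod.smul_snd, Prod.snd_sub]; module
    rw [e]
    refine ⟨(g1.smul h1t).add (f1.smul ht0.le), ?_, ?_, ?_⟩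
    · intro i
      simp only [Matrix.mul_add, Matrix.mul_smul, Matrix.trace_add, Matrix.trace_smul, f2, g2,
        smul_eq_mul]
      ring
    · have e2 : C + (εb + t * (ε - εb)) • Cbar - ∑ i, ((1 - t) • ys + t • y) i • A i =
          (1 - t) • (C + εb • Cbar - ∑ i, ys i • A i) + t • (C + ε • Cbar - ∑ i, y i • A i) := by
        simp only [Pi.add_apply, Pi.smul_apply, add_smul, smul_assoc, Finset.sum_add_distrib,
          ← Finset.smul_sum]
        module
      exact e2 ▸ (g3.smul h1t).add (f3.smul ht0.le)
    · have e3 : ∑ i, b i * ((1 - t) • ys + t • y) i =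
          (1 - t) * ∑ i, b i * ys i + t * ∑ i, b i * y i := by
        rw [Finset.mul_sum, Finset.mul_sum, ← Finset.sum_add_distrib]
        refine Finset.sum_congr rfl fun i _ => ?_
        simp only [Pi.add_apply, Pi.smul_apply, smul_eq_mul]
        ring
      simp only [e3, Matrix.mul_add, Matrix.add_mul, Matrix.mul_sub, Matrix.mul_smul,
        Matrix.smul_mul, Matrix.trace_add, Matrix.trace_sub, Matrix.trace_smul, smul_eq_mul,
        zero_mul] at f4 g4 ⊢
      linear_combination t * f4 + (1 - t) * g4

end

lemma aux_rank_open {n : ℕ} (r : ℕ) : IsOpen {M : Matrix (Fin n) (Fin n) ℝ | r ≤ M.rank} := by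
  let φ : Matrix (Fin n) (Fin n) ℝ →ₗ[ℝ] ((Fin n → ℝ) →L[ℝ] (Fin n → ℝ)) :=
    (LinearMap.toContinuousLinearMap (𝕜 := ℝ) (E := Fin n → ℝ) (F' := Fin n → ℝ)).toLinearMap ∘ₗ
      (Matrix.toLin' (R := ℝ) (m := Fin n) (n := Fin n)).toLinearMap
  have hφ : Continuous φ := φ.continuous_of_finiteDimensional
  have := (isOpen_setOfPred_nat_le_rank (𝕜 := ℝ) (E := Fin n → ℝ) (F := Fin n → ℝ) r).preimage hφ
  convert this using 1
  ext M
  change r ≤ Module.finrank ℝ _ ↔ (r : Cardinal) ≤ Module.rank ℝ _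
  rw [← Module.finrank_eq_rank, Nat.cast_le]
  rfl

lemma aux_rank_add {n : ℕ} {X S : Matrix (Fin n) (Fin n) ℝ} (h : (X + S).PosDef) :
    n ≤ X.rank + S.rank := by
  have h1 := Matrix.rank_of_isUnit _ h.isUnit
  have h2 : LinearMap.range (X + S).mulVecLin ≤
      LinearMap.range X.mulVecLin ⊔ LinearMap.range S.mulVecLin := by
    rintro _ ⟨v, rfl⟩
    rw [Matrix.mulVecLin_add]
    exact Submodule.add_mem_sup ⟨v, rfl⟩ ⟨v, rfl⟩
  have h3 : (X + S).rank ≤ X.rank + S.rank :=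
    (Submodule.finrank_mono h2).trans (Submodule.finrank_add_le_finrank_add_finrank _ _)
  rw [h1, Fintype.card_fin] at h3
  exact h3

lemma aux_main {n m : ℕ} {C Cbar : Matrix (Fin n) (Fin n) ℝ}
    {A : Fin m → Matrix (Fin n) (Fin n) ℝ} {b : Fin m → ℝ}
    (hSA : StandingAssumptions C Cbar A b)
    {εbar : ℝ} (htr : IsTransitionPoint C Cbar A b εbar)
    {Xs Ss : Matrix (Fin n) (Fin n) ℝ} {ys : Fin m → ℝ}
    (hX : Xs ∈ PrimalOpt C Cbar A b εbar) (hS : (ys, Ss) ∈ DualOpt C Cbar A b εbar)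
    (hJ : JNonsingular A Xs Ss) : False := by
  have hA := hSA.2.2.1
  have hz := aux_opt_zero hSA hX hS
  have hpd := aux_strict hA hX.1.2.2 hS.1.2.2 hJ
  have hr : n ≤ Xs.rank + Ss.rank := aux_rank_add hpd
  have toF : ∀ {ε X y S}, X ∈ PrimalOpt C Cbar A b ε → (y, S) ∈ DualOpt C Cbar A b ε →
      auxF C Cbar A b Xs (ε, 0) (X, y) := by
    intro ε X y S h1 h2
    have h3 := aux_opt_zero hSA h1 h2
    have h4 := aux_gap h1.1 h2.1.2.1
    have h5 : C + ε • Cbar - ∑ i, y i • A i = S := by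
      rw [← h2.1.2.1]; simp
    exact ⟨h1.1.2.2, h1.1.2.1, h5 ▸ h2.1.2.2, by
      simp only at h4 ⊢
      rw [← h4, h3, zero_mul]⟩
  have huniq : ∀ q, auxF C Cbar A b Xs (εbar, 0) q → q = (Xs, ys) := by
    rintro ⟨Z, z⟩ ⟨f1, f2, f3, f4⟩
    simp only [zero_mul] at f1 f2 f3 f4
    have hZ : PrimalFeasible A b Z := ⟨(aux_psd_iff.1 f1).1, f2, f1⟩
    have hT : DualFeasible C Cbar A εbar z (C + εbar • Cbar - ∑ i, z i • A i) :=
      ⟨(aux_psd_iff.1 f3).1, by abel, f3⟩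
    have := aux_unique hJ hX.1 hS.1 hz hZ hT (by rw [aux_gap hZ hT.2.1, f4])
    rw [this.1, this.2.1]
  have hSe : C + εbar • Cbar - ∑ i, ys i • A i = Ss := by
    rw [← hS.1.2.1]; simp
  have hc : Continuous fun z : ℝ × (Matrix (Fin n) (Fin n) ℝ × (Fin m → ℝ)) =>
      C + z.1 • Cbar - ∑ i, z.2.2 i • A i := by
    fun_prop
  have hc1 : Continuous fun z : ℝ × (Matrix (Fin n) (Fin n) ℝ × (Fin m → ℝ)) => z.2.1 := by
    fun_prop
  have hopen := ((aux_rank_open Xs.rank).preimage hc1).inter ((aux_rank_open Ss.rank).preimage hc)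
  have hmem := hopen.mem_nhds (x := (εbar, (Xs, ys))) ⟨le_refl Xs.rank, by
    change Ss.rank ≤ (C + εbar • Cbar - ∑ i, ys i • A i).rank
    rw [hSe]⟩
  obtain ⟨u, hu, v, hv, huv⟩ := mem_nhds_prod_iff.1 hmem
  have hst := aux_stab (toF hX hS) huniq hv
  obtain ⟨ξ, hξ, hb⟩ := Metric.eventually_nhds_iff.1 (hst.and hu)
  obtain ⟨ε, ⟨hε, -⟩, hnd⟩ := htr.2.2 ξ hξ
  obtain ⟨hb1, hb2⟩ := hb (y := ε) (by
    rw [Real.dist_eq, abs_lt]; constructor <;> linarith [hε.1, hε.2])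
  apply hnd
  intro X y S X' y' S' h1 h2
  have o1 := intrinsicInterior_subset h1.1
  have o2 := intrinsicInterior_subset h1.2
  have o3 := intrinsicInterior_subset h2.1
  have o4 := intrinsicInterior_subset h2.2
  have hu2 := aux_unique hJ hX.1 hS.1 hz o3.1 o4.1 (aux_opt_zero hSA o3 o4)
  have hu3 : S' = Ss := hu2.2.2
  rw [hu2.1, hu3]
  have hq := huv (Set.mk_mem_prod hb2 (hb1 _ (toF o1 o2)))
  have hq1 : Xs.rank ≤ X.rank := hq.1
  have hq2 : Ss.rank ≤ (C + ε • Cbar - ∑ i, y i • A i).rank := hq.2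
  have h5 : C + ε • Cbar - ∑ i, y i • A i = S := by
    rw [← o2.1.2.1]; simp
  rw [h5] at hq2
  have hXS := (aux_psd_mul o1.1.2.2 o2.1.2.2).2 (aux_opt_zero hSA o1 o2)
  have hle : X.rank + S.rank ≤ _ := Matrix.rank_add_rank_le_card_of_mul_eq_zero hXS
  rw [Fintype.card_fin] at hle
  change X.rank = Xs.rank ∧ S.rank = Ss.rank
  constructor <;> omega


/-- at a transition point, strict complementarity, primal nondegeneracy or dual
nondegeneracy fails; equivalently the Jacobian is singular at any maximally complementary
solution. -/
theorem stmt8 {n m : ℕ} (C Cbar : Matrix (Fin n) (Fin n) ℝ)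
    (A : Fin m → Matrix (Fin n) (Fin n) ℝ) (b : Fin m → ℝ)
    (hSA : StandingAssumptions C Cbar A b)
    (εbar : ℝ) (htr : IsTransitionPoint C Cbar A b εbar)
    (Xs Ss : Matrix (Fin n) (Fin n) ℝ) (ys : Fin m → ℝ)
    (hmc : MaxComp C Cbar A b εbar Xs ys Ss) :
    ¬ ((Xs + Ss).PosDef ∧ PrimalNondeg A Xs ∧ DualNondeg A Ss) ∧
      ¬ JNonsingular A Xs Ss := by
  have hX := intrinsicInterior_subset hmc.1
  have hS := intrinsicInterior_subset hmc.2
  refine ⟨fun h => ?_, fun hJ => aux_main hSA htr hX hS hJ⟩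
  have h0 := (aux_psd_mul hX.1.2.2 hS.1.2.2).2 (aux_opt_zero hSA hX hS)
  exact aux_main hSA htr hX hS
    (aux_nondeg hX.1.2.2 hS.1.2.2 hX.1.1 hS.1.1 h0 h.1 h.2.1 h.2.2)
end
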